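/- arXiv:2509.00769 — 2 statements merged into one kernel-verified Lean document; each statement's English description precedes it below -/
import Mathlib

section
/- Let a and b be positive integers with b > a, and let G be a connected graph of order n ≥ 2(a+b+2)(b+2) with minimum degree δ(G) ≥ a. If ρ(G) ≥ ρ(H_n^{a,b}), then G contains an [a,b]-factor, unless G is isomorphic to H_n^{a,b}. -/
open Finset Matrix

namespace SimpleGraph

variable {V : Type*} [Fintype V] [DecidableEq V]

lemma isHermitian_adjMatrix' (G : SimpleGraph V) [DecidableRel G.Adj] :
    (G.adjMatrix ℝ).IsHermitian := by
  rw [Matrix.IsHermitian, conjTranspose_eq_transpose_of_trivial, isSymm_adjMatrix]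

/-- The spectral radius (largest adjacency eigenvalue) of a finite simple graph. -/
noncomputable def spectralRadius (G : SimpleGraph V) : ℝ :=
  letI := Classical.decRel G.Adj
  ⨆ i, (isHermitian_adjMatrix' G).eigenvalues i

/-- `G` has an `[a,b]`-factor: a spanning subgraph all of whose degrees lie in `[a,b]`. -/
def HasABFactor (G : SimpleGraph V) (a b : ℕ) : Prop :=
  ∃ H : SimpleGraph V, H ≤ G ∧ ∀ v : V,
    letI := Classical.decRel H.Adj
    a ≤ H.degree v ∧ H.degree v ≤ b

/-- `G` has a fractional `[a,b]`-factor: a weighting of the edges by values in `[0,1]`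
such that the total weight at every vertex lies in `[a,b]`. -/
def HasFractionalABFactor (G : SimpleGraph V) (a b : ℕ) : Prop :=
  letI := Classical.decRel G.Adj
  ∃ h : Sym2 V → ℝ, (∀ e ∈ G.edgeSet, 0 ≤ h e ∧ h e ≤ 1) ∧
    ∀ v : V, (a : ℝ) ≤ ∑ e ∈ G.incidenceFinset v, h e ∧
      ∑ e ∈ G.incidenceFinset v, h e ≤ (b : ℝ)

end SimpleGraph

/-- `K_a ∨ (K_{n-a-b-1} ∪ (b+1)K_1)`, with vertices `0,…,a-1` forming the `K_a`,
vertices `a,…,n-b-2` forming the `K_{n-a-b-1}`, and the last `b+1` vertices independent. -/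
def baseGraph (n a b : ℕ) : SimpleGraph (Fin n) :=
  SimpleGraph.fromRel (fun i j => (i : ℕ) < a ∨ ((i : ℕ) < n - b - 1 ∧ (j : ℕ) < n - b - 1))

/-- The graph `H_n^{a,b}`: `baseGraph n a b` together with `a-1` extra edges joining the
vertex `n-b-1` (a fixed vertex of the independent part `(b+1)K_1`) to the `a-1`
vertices `a,…,2a-2` of the `K_{n-a-b-1}` part. -/
def Hgraph (n a b : ℕ) : SimpleGraph (Fin n) :=
  SimpleGraph.fromRel (fun i j => (i : ℕ) < a ∨ ((i : ℕ) < n - b - 1 ∧ (j : ℕ) < n - b - 1) ∨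
    ((i : ℕ) = n - b - 1 ∧ a ≤ (j : ℕ) ∧ (j : ℕ) < 2 * a - 1))

/-- The family `𝒢_n^{a,b}`: graphs obtained from `baseGraph n a b` by adding `a-1` edges
between the clique part `{a,…,n-b-2}` and the independent part `{n-b-1,…,n-1}`. -/
def GFamily (n a b : ℕ) (G : SimpleGraph (Fin n)) : Prop :=
  ∃ F : Finset (Fin n × Fin n), F.card = a - 1 ∧
    (∀ p ∈ F, a ≤ (p.1 : ℕ) ∧ (p.1 : ℕ) < n - b - 1 ∧ n - b - 1 ≤ (p.2 : ℕ)) ∧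
    G = baseGraph n a b ⊔ SimpleGraph.fromEdgeSet ((fun p : Fin n × Fin n => s(p.1, p.2)) '' F)

/-!
If `G` has no `[a,b]`-factor, take a spanning subgraph with degrees at most `b` and least total
deficiency below `a`. Alternating walks from a deficient vertex end at vertices of degree `b` after
an odd number of steps and of degree at most `a` after an even number; these two sets `S` and `T`
satisfy Lovász's inequality `b |S| + ∑_{v ∈ T} d_{G - S}(v) < a |T|`, and `δ(G) ≥ a` forces
`|T| ≥ b + 1`.

* If `|T| ≥ b + 2`, the inequality leaves so few edges that Hong's bound `ρ² ≤ 2m - n + 1` gives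
  `ρ(G) < n - b - 2`, while `H_n^{a,b}` contains a clique on `n - b - 1` vertices.
* If `|T| = b + 1` and some vertex of `T` has degree at least `2a - 1`, then `|S| = a` and `G` is
  a spanning subgraph of the connected graph `H_n^{a,b}`, so `ρ(G) ≥ ρ(H_n^{a,b})` forces
  equality.
* If `|T| = b + 1` and all degrees on `T` are at most `2a - 2`, the excess of `ρ` over `n - b - 2`
  is governed by the sum of the squared degrees on `T`, which is smaller for `G` than the
  `b a² + (2a - 1)²` of `H_n^{a,b}`.
-/

section Spectral

variable {V : Type*} [Fintype V] [DecidableEq V] (G : SimpleGraph V) [DecidableRel G.Adj]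

lemma spectralRadius_eq_iSup_eigenvalues :
    G.spectralRadius = ⨆ i, (G.isHermitian_adjMatrix').eigenvalues i := by
  rw [SimpleGraph.spectralRadius]
  congr!

lemma spectralRadius_smul_one_sub_adjMatrix_posSemidef :
    (G.spectralRadius • (1 : Matrix V V ℝ) - G.adjMatrix ℝ).PosSemidef := by
  open scoped MatrixOrder in
  have hspec : ∀ μ ∈ spectrum ℝ (G.adjMatrix ℝ), μ ≤ G.spectralRadius := by
    rw [G.isHermitian_adjMatrix'.spectrum_real_eq_range_eigenvalues,
      spectralRadius_eq_iSup_eigenvalues]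
    rintro _ ⟨i, rfl⟩
    exact le_ciSup (Set.finite_range _).bddAbove i
  have hle : G.adjMatrix ℝ ≤ algebraMap ℝ (Matrix V V ℝ) G.spectralRadius :=
    le_algebraMap_of_spectrum_le hspec G.isHermitian_adjMatrix'
  rwa [Matrix.le_iff, Algebra.algebraMap_eq_smul_one] at hle

lemma dotProduct_spectralRadius_smul_one_sub_adjMatrix_mulVec (x : V → ℝ) :
    x ⬝ᵥ (G.spectralRadius • (1 : Matrix V V ℝ) - G.adjMatrix ℝ) *ᵥ x =
      G.spectralRadius * (x ⬝ᵥ x) - x ⬝ᵥ G.adjMatrix ℝ *ᵥ x := by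
  rw [sub_mulVec, dotProduct_sub, smul_mulVec, one_mulVec, dotProduct_smul, smul_eq_mul]

lemma dotProduct_adjMatrix_mulVec_le (x : V → ℝ) :
    x ⬝ᵥ G.adjMatrix ℝ *ᵥ x ≤ G.spectralRadius * (x ⬝ᵥ x) := by
  have hnonneg := (spectralRadius_smul_one_sub_adjMatrix_posSemidef G).dotProduct_mulVec_nonneg x
  rwa [star_trivial, dotProduct_spectralRadius_smul_one_sub_adjMatrix_mulVec, sub_nonneg]
    at hnonneg

variable {G}

lemma adjMatrix_mulVec_eq_of_le_dotProduct {x : V → ℝ}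
    (hx : G.spectralRadius * (x ⬝ᵥ x) ≤ x ⬝ᵥ G.adjMatrix ℝ *ᵥ x) :
    G.adjMatrix ℝ *ᵥ x = G.spectralRadius • x := by
  have hker := ((spectralRadius_smul_one_sub_adjMatrix_posSemidef G).dotProduct_mulVec_zero_iff x).1
    (by rw [star_trivial, dotProduct_spectralRadius_smul_one_sub_adjMatrix_mulVec,
      (dotProduct_adjMatrix_mulVec_le G x).antisymm hx, sub_self])
  rw [sub_mulVec, smul_mulVec, one_mulVec, sub_eq_zero] at hker
  exact hker.symm

lemma le_spectralRadius_of_mulVec_eq {x : V → ℝ} {c : ℝ} (hx : x ≠ 0)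
    (hc : G.adjMatrix ℝ *ᵥ x = c • x) : c ≤ G.spectralRadius := by
  have hle := dotProduct_adjMatrix_mulVec_le G x
  rw [hc, dotProduct_smul, smul_eq_mul] at hle
  exact le_of_mul_le_mul_right hle (by simpa using dotProduct_star_self_pos_iff.2 hx)

variable (G) in
lemma exists_adjMatrix_mulVec_eq_spectralRadius_smul [Nonempty V] :
    ∃ x : V → ℝ, x ≠ 0 ∧ G.adjMatrix ℝ *ᵥ x = G.spectralRadius • x := by
  obtain ⟨i, hi⟩ := exists_eq_ciSup_of_finite (f := G.isHermitian_adjMatrix'.eigenvalues)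
  refine ⟨(G.isHermitian_adjMatrix'.eigenvectorBasis i).ofLp, ?_, ?_⟩
  · rw [Ne, WithLp.ofLp_eq_zero]
    exact G.isHermitian_adjMatrix'.eigenvectorBasis.toBasis.ne_zero i
  · rw [spectralRadius_eq_iSup_eigenvalues, ← hi]
    exact G.isHermitian_adjMatrix'.mulVec_eigenvectorBasis i

variable (G) in
/-- A Perron vector of `G`: a nonzero entrywise nonnegative eigenvector of the adjacency matrix
for the eigenvalue `ρ(G)`. As `G` may be disconnected, entries are allowed to vanish. -/
structure IsPerronVector (x : V → ℝ) : Prop where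
  nonneg : ∀ v, 0 ≤ x v
  ne_zero : x ≠ 0
  mulVec_eq : G.adjMatrix ℝ *ᵥ x = G.spectralRadius • x

-- Passing to absolute values does not decrease the quadratic form, so it stays maximal.
variable (G) in
lemma exists_isPerronVector [Nonempty V] : ∃ x, IsPerronVector G x := by
  obtain ⟨x, hx0, hx⟩ := exists_adjMatrix_mulVec_eq_spectralRadius_smul G
  refine ⟨fun v => |x v|, fun v => abs_nonneg _, fun h => hx0 ?_,
    adjMatrix_mulVec_eq_of_le_dotProduct ?_⟩
  · exact funext fun v => abs_eq_zero.1 (congrFun h v)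
  calc G.spectralRadius * ((fun v => |x v|) ⬝ᵥ fun v => |x v|)
      = x ⬝ᵥ G.adjMatrix ℝ *ᵥ x := by
        rw [hx, dotProduct_smul, smul_eq_mul]
        simp only [dotProduct, abs_mul_abs_self]
    _ ≤ (fun v => |x v|) ⬝ᵥ G.adjMatrix ℝ *ᵥ fun v => |x v| := by
        simp only [dotProduct, SimpleGraph.adjMatrix_mulVec_apply]
        refine sum_le_sum fun v _ => (le_abs_self _).trans ?_
        rw [abs_mul]
        gcongr
        exact abs_sum_le_sum_abs _ _

namespace IsPerronVector

variable {x : V → ℝ}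

lemma sum_neighborFinset (hx : IsPerronVector G x) (v : V) :
    ∑ u ∈ G.neighborFinset v, x u = G.spectralRadius * x v := by
  rw [← SimpleGraph.adjMatrix_mulVec_apply, hx.mulVec_eq, Pi.smul_apply, smul_eq_mul]

lemma exists_pos (hx : IsPerronVector G x) : ∃ v, 0 < x v := by
  obtain ⟨v, hv⟩ := Function.ne_iff.1 hx.ne_zero
  exact ⟨v, (hx.nonneg v).lt_of_ne' hv⟩

lemma exists_forall_le_and_pos (hx : IsPerronVector G x) : ∃ m, 0 < x m ∧ ∀ v, x v ≤ x m := by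
  obtain ⟨v, hv⟩ := hx.exists_pos
  obtain ⟨m, -, hm⟩ := exists_max_image univ x ⟨v, mem_univ v⟩
  exact ⟨m, hv.trans_le (hm v (mem_univ v)), fun w => hm w (mem_univ w)⟩

lemma pos_of_adj (hx : IsPerronVector G x) {u v : V} (huv : G.Adj u v) (hu : 0 < x u) :
    0 < x v := by
  refine (hx.nonneg v).lt_of_ne' fun hv => hu.ne' ?_
  have hsum := hx.sum_neighborFinset v
  rw [hv, mul_zero, sum_eq_zero_iff_of_nonneg fun w _ => hx.nonneg w] at hsum
  exact hsum u ((G.mem_neighborFinset v u).2 huv.symm)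

lemma pos (hx : IsPerronVector G x) (hG : G.Preconnected) (v : V) : 0 < x v := by
  obtain ⟨u, hu⟩ := hx.exists_pos
  obtain ⟨p⟩ := hG u v
  induction p with
  | nil => exact hu
  | cons h _ ih => exact ih (hx.pos_of_adj h hu)

end IsPerronVector

end Spectral

section Comparison

variable {V W : Type*} [Fintype V] [DecidableEq V] [Fintype W] [DecidableEq W] {G : SimpleGraph V}

-- A Perron vector of `G` is a maximizer of the Rayleigh quotient of `H` as well, hence a
-- positive eigenvector of `H`, and each edge of `H` missing in `G` would contribute.
lemma eq_of_le_of_spectralRadius_le {H : SimpleGraph V} (hle : G ≤ H) (hH : H.Connected)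
    (hρ : H.spectralRadius ≤ G.spectralRadius) : G = H := by
  classical
  have := hH.nonempty
  obtain ⟨x, hx⟩ := exists_isPerronVector G
  have hsub (u : V) : G.neighborFinset u ⊆ H.neighborFinset u := fun w => by
    simpa only [SimpleGraph.mem_neighborFinset] using @hle u w
  have hrow (u : V) : (G.adjMatrix ℝ *ᵥ x) u ≤ (H.adjMatrix ℝ *ᵥ x) u := by
    simp only [SimpleGraph.adjMatrix_mulVec_apply]
    exact sum_le_sum_of_subset_of_nonneg (hsub u) fun w _ _ => hx.nonneg w
  have hquad : G.spectralRadius * (x ⬝ᵥ x) ≤ x ⬝ᵥ H.adjMatrix ℝ *ᵥ x := by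
    rw [← smul_eq_mul, ← dotProduct_smul, ← hx.mulVec_eq]
    exact sum_le_sum fun u _ => mul_le_mul_of_nonneg_left (hrow u) (hx.nonneg u)
  have hself : 0 ≤ x ⬝ᵥ x := by simpa using dotProduct_star_self_nonneg x
  have hxH : IsPerronVector H x := ⟨hx.nonneg, hx.ne_zero, adjMatrix_mulVec_eq_of_le_dotProduct <|
    (mul_le_mul_of_nonneg_right hρ hself).trans hquad⟩
  refine hle.antisymm fun u v huv => by_contra fun hn => ?_
  have hlt : G.spectralRadius * x u < H.spectralRadius * x u := by
    rw [← hx.sum_neighborFinset, ← hxH.sum_neighborFinset]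
    exact sum_lt_sum_of_subset (hsub u) (by simpa using huv) (by simpa using hn)
      (hxH.pos hH.preconnected v) fun w _ _ => hx.nonneg w
  exact hlt.not_ge (mul_le_mul_of_nonneg_right hρ (hx.nonneg u))

lemma spectralRadius_le_of_iso [Nonempty V] {H : SimpleGraph W} (e : G ≃g H) :
    G.spectralRadius ≤ H.spectralRadius := by
  classical
  obtain ⟨x, hx⟩ := exists_isPerronVector G
  refine le_spectralRadius_of_mulVec_eq (x := x ∘ e.symm) (fun h => hx.ne_zero ?_)
    (funext fun w => ?_)
  · exact funext fun v => by simpa using congrFun h (e v)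
  · rw [SimpleGraph.adjMatrix_mulVec_apply, Pi.smul_apply, smul_eq_mul, Function.comp_apply,
      ← hx.sum_neighborFinset]
    refine sum_equiv e.symm.toEquiv (fun u => ?_) fun u _ => rfl
    simp [e.symm.map_adj_iff]

lemma nonempty_iso_of_le_comap_of_spectralRadius_le {H : SimpleGraph W} (e : V ≃ W)
    (hle : G ≤ H.comap e) (hH : H.Connected) (hρ : H.spectralRadius ≤ G.spectralRadius) :
    Nonempty (G ≃g H) := by
  classical
  have isoH : H.comap e ≃g H := SimpleGraph.Iso.comap e H
  have hconn : (H.comap e).Connected := isoH.connected_iff.2 hH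
  have := hconn.nonempty
  have hG : G = H.comap e :=
    eq_of_le_of_spectralRadius_le hle hconn ((spectralRadius_le_of_iso isoH).trans hρ)
  exact hG ▸ ⟨isoH⟩

end Comparison

section Valence

variable {V : Type*} {H K : SimpleGraph V} {u v w : V}

/-- The degree of `v` in `H`, as a cardinality that involves no decidability instance, so that it
can be compared across the subgraphs of a graph. -/
noncomputable def valence (H : SimpleGraph V) (v : V) : ℕ := (H.neighborSet v).ncard

lemma valence_eq_degree [Fintype (H.neighborSet v)] : valence H v = H.degree v := by
  rw [valence, Set.ncard_eq_toFinset_card', ← SimpleGraph.card_neighborFinset_eq_degree,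
    SimpleGraph.neighborFinset]

lemma valence_mono [Finite V] (h : H ≤ K) (v : V) : valence H v ≤ valence K v :=
  Set.ncard_le_ncard fun _ hw => h hw

lemma valence_sup_edge_left [Finite V] (huv : u ≠ v) (h : ¬ H.Adj u v) :
    valence (H ⊔ SimpleGraph.edge u v) u = valence H u + 1 := by
  have hnbr : (H ⊔ SimpleGraph.edge u v).neighborSet u = insert v (H.neighborSet u) := by
    ext w
    simp only [SimpleGraph.mem_neighborSet, SimpleGraph.sup_adj, SimpleGraph.edge_adj,
      Set.mem_insert_iff]
    grind
  exact (congrArg Set.ncard hnbr).trans (Set.ncard_insert_of_notMem h)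

lemma valence_sup_edge_right [Finite V] (huv : u ≠ v) (h : ¬ H.Adj u v) :
    valence (H ⊔ SimpleGraph.edge u v) v = valence H v + 1 := by
  rw [SimpleGraph.edge_comm, valence_sup_edge_left huv.symm (mt SimpleGraph.Adj.symm h)]

lemma valence_sup_edge_of_ne (hu : w ≠ u) (hv : w ≠ v) :
    valence (H ⊔ SimpleGraph.edge u v) w = valence H w := by
  have hnbr : (H ⊔ SimpleGraph.edge u v).neighborSet w = H.neighborSet w := by
    ext x
    simp only [SimpleGraph.mem_neighborSet, SimpleGraph.sup_adj, SimpleGraph.edge_adj]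
    grind
  rw [valence, hnbr, valence]

lemma sdiff_edge_sup_edge (h : H.Adj u v) :
    H \ SimpleGraph.edge u v ⊔ SimpleGraph.edge u v = H :=
  sdiff_sup_cancel (H.edge_le_iff.2 (Or.inr h))

lemma not_sdiff_edge_adj : ¬ (H \ SimpleGraph.edge u v).Adj u v := by
  rw [SimpleGraph.sdiff_adj, SimpleGraph.edge_adj]
  rintro ⟨hadj, hedge⟩
  exact hedge ⟨Or.inl ⟨rfl, rfl⟩, hadj.ne⟩

lemma valence_sdiff_edge_left [Finite V] (h : H.Adj u v) :
    valence (H \ SimpleGraph.edge u v) u + 1 = valence H u := by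
  rw [← valence_sup_edge_left h.ne not_sdiff_edge_adj, sdiff_edge_sup_edge h]

lemma valence_sdiff_edge_right [Finite V] (h : H.Adj u v) :
    valence (H \ SimpleGraph.edge u v) v + 1 = valence H v := by
  rw [← valence_sup_edge_right h.ne not_sdiff_edge_adj, sdiff_edge_sup_edge h]

lemma valence_sdiff_edge_of_ne (h : H.Adj u v) (hu : w ≠ u) (hv : w ≠ v) :
    valence (H \ SimpleGraph.edge u v) w = valence H w := by
  rw [← valence_sup_edge_of_ne hu hv, sdiff_edge_sup_edge h]

end Valence

section Optimal

variable {V : Type*} [Fintype V]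

/-- The total amount by which the degrees of `H` fall short of `a`. -/
noncomputable def deficiency (a : ℕ) (H : SimpleGraph V) : ℕ := ∑ v, (a - valence H v)

/-- Among the spanning subgraphs of `G` with all degrees at most `b`, the subgraph `H` has the
least `deficiency a`. -/
structure IsOptimal (G : SimpleGraph V) (a b : ℕ) (H : SimpleGraph V) : Prop where
  le : H ≤ G
  valence_le : ∀ v, valence H v ≤ b
  deficiency_le : ∀ K ≤ G, (∀ v, valence K v ≤ b) → deficiency a H ≤ deficiency a K

variable {G H K : SimpleGraph V} {a b : ℕ} {u v : V}

lemma deficiency_anti (h : H ≤ K) : deficiency a K ≤ deficiency a H :=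
  sum_le_sum fun v _ => Nat.sub_le_sub_left (valence_mono h v) a

variable (G a b) in
lemma exists_isOptimal : ∃ H, IsOptimal G a b H := by
  obtain ⟨H, ⟨hle, hval⟩, hmin⟩ := Set.exists_min_image
    {K | K ≤ G ∧ ∀ v, valence K v ≤ b} (deficiency a) (Set.toFinite _)
    ⟨⊥, bot_le, by simp [valence]⟩
  exact ⟨H, hle, hval, fun K hK hKb => hmin K ⟨hK, hKb⟩⟩

namespace IsOptimal

lemma sup_edge (hH : IsOptimal G a b H) (hG : G.Adj u v) (hn : ¬ H.Adj u v)
    (hu : valence H u < b) (hv : valence H v < b) :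
    IsOptimal G a b (H ⊔ SimpleGraph.edge u v) where
  le := sup_le hH.le (G.edge_le_iff.2 (Or.inr hG))
  valence_le x := by
    by_cases hxu : x = u
    · rwa [hxu, valence_sup_edge_left hG.ne hn, Nat.add_one_le_iff]
    by_cases hxv : x = v
    · rwa [hxv, valence_sup_edge_right hG.ne hn, Nat.add_one_le_iff]
    rw [valence_sup_edge_of_ne hxu hxv]
    exact hH.valence_le x
  deficiency_le K hK hKb := (deficiency_anti le_sup_left).trans (hH.deficiency_le K hK hKb)

lemma le_valence_of_not_adj (hH : IsOptimal G a b H) (hG : G.Adj u v) (hn : ¬ H.Adj u v)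
    (hu : valence H u < b) (hv : valence H v < b) : a ≤ valence H u := by
  by_contra! hlt
  have hsup := hH.sup_edge hG hn hu hv
  refine (hH.deficiency_le _ hsup.le hsup.valence_le).not_gt <| sum_lt_sum
    (fun x _ => Nat.sub_le_sub_left (valence_mono le_sup_left x) a) ⟨u, mem_univ u, ?_⟩
  rw [valence_sup_edge_left hG.ne hn]
  lia

lemma sdiff_edge (hH : IsOptimal G a b H) (hadj : H.Adj u v)
    (hu : a < valence H u) (hv : a < valence H v) :
    IsOptimal G a b (H \ SimpleGraph.edge u v) where
  le := sdiff_le.trans hH.le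
  valence_le x := (valence_mono sdiff_le x).trans (hH.valence_le x)
  deficiency_le K hK hKb := by
    refine le_trans (sum_le_sum fun x _ => ?_) (hH.deficiency_le K hK hKb)
    by_cases hxu : x = u
    · have := valence_sdiff_edge_left hadj
      rw [hxu]
      lia
    by_cases hxv : x = v
    · have := valence_sdiff_edge_right hadj
      rw [hxv]
      lia
    rw [valence_sdiff_edge_of_ne hadj hxu hxv]

end IsOptimal

end Optimal

section AltReachable

variable {V : Type*} {G H K : SimpleGraph V} {a b k : ℕ} {u v x y : V}

/-- `v` is reached from `u` by a walk of length `k` in `G` whose edges alternate between being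
outside and inside `H`, the first one being outside. -/
inductive AltReachable (G H : SimpleGraph V) (u : V) : ℕ → V → Prop
  | zero : AltReachable G H u 0 u
  | step {k : ℕ} {v w : V} (hv : AltReachable G H u k v) (hG : G.Adj v w)
      (hH : H.Adj v w ↔ Odd k) : AltReachable G H u (k + 1) w

/-- Alternating walks of length at most `k` from `u` end in a vertex whose degree in `H` is at
most `a` if the length is even, and exactly `b` if it is odd. -/
def ValenceAlternates (G H : SimpleGraph V) (a b : ℕ) (u : V) (k : ℕ) : Prop :=
  ∀ j ≤ k, ∀ v, AltReachable G H u j v →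
    (Even j → valence H v ≤ a) ∧ (Odd j → valence H v = b)

lemma AltReachable.congr (hv : AltReachable G H u k v)
    (hHK : ∀ j < k, ∀ x y, AltReachable G H u j x → AltReachable G H u (j + 1) y →
      (K.Adj x y ↔ H.Adj x y)) :
    AltReachable G K u k v := by
  induction hv with
  | zero => exact .zero
  | step hv hG hH ih =>
    exact .step (ih fun j hj => hHK j (hj.trans (Nat.lt_succ_self _))) hG
      ((hHK _ (Nat.lt_succ_self _) _ _ hv (.step hv hG hH)).trans hH)

lemma AltReachable.of_agree_off_edge (hv : AltReachable G H u k v)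
    (halt : ValenceAlternates G H a b u k)
    (hxy : valence H x < b ∧ valence H y < b ∨ a < valence H x ∧ a < valence H y)
    (hK : ∀ p q, s(p, q) ≠ s(x, y) → (K.Adj p q ↔ H.Adj p q)) :
    AltReachable G K u k v := by
  refine hv.congr fun j hj p q hp hq => hK p q fun heq => ?_
  have hp' := halt j hj.le p hp
  have hq' := halt (j + 1) hj q hq
  rw [Sym2.eq_iff] at heq
  grind

lemma sup_edge_adj_iff_of_ne {p q : V} (h : s(p, q) ≠ s(x, y)) :
    (H ⊔ SimpleGraph.edge x y).Adj p q ↔ H.Adj p q := by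
  rw [Ne, Sym2.eq_iff] at h
  rw [SimpleGraph.sup_adj, SimpleGraph.edge_adj]
  tauto

lemma sdiff_edge_adj_iff_of_ne {p q : V} (h : s(p, q) ≠ s(x, y)) :
    (H \ SimpleGraph.edge x y).Adj p q ↔ H.Adj p q := by
  rw [Ne, Sym2.eq_iff] at h
  rw [SimpleGraph.sdiff_adj, SimpleGraph.edge_adj]
  tauto

end AltReachable

section Barrier

variable {V : Type*} [Fintype V] {G H : SimpleGraph V} {a b k : ℕ} {u v x : V}

namespace IsOptimal

-- If `deg v < b`, adding the edge `xv` keeps `H` optimal but makes `deg x` exceed `a`.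
lemma valence_eq_of_even_step (hab : a < b) (hH : IsOptimal G a b H) (hu : valence H u < a)
    (ih : ∀ K, IsOptimal G a b K → valence K u < a → ValenceAlternates G K a b u k)
    (hk : Even k) (hx : AltReachable G H u k x) (hG : G.Adj x v) (hn : ¬ H.Adj x v) :
    valence H v = b := by
  by_contra hvb
  have hvlt : valence H v < b := (hH.valence_le v).lt_of_ne hvb
  have hxle : valence H x ≤ a := (ih H hH hu k le_rfl x hx).1 hk
  have hxlt : valence H x < b := hxle.trans_lt hab
  have hax : a ≤ valence H x := hH.le_valence_of_not_adj hG hn hxlt hvlt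
  have hav : a ≤ valence H v :=
    hH.le_valence_of_not_adj hG.symm (mt SimpleGraph.Adj.symm hn) hvlt hxlt
  have hux : u ≠ x := by rintro rfl; lia
  have huv : u ≠ v := by rintro rfl; lia
  have hdeg := (ih _ (hH.sup_edge hG hn hxlt hvlt)
    ((valence_sup_edge_of_ne hux huv).trans_lt hu) k le_rfl x
    (hx.of_agree_off_edge (ih H hH hu) (.inl ⟨hxlt, hvlt⟩)
      fun _ _ => sup_edge_adj_iff_of_ne)).1 hk
  rw [valence_sup_edge_left hG.ne hn] at hdeg
  lia

-- If `a < deg v`, deleting the edge `xv` keeps `H` optimal but makes `deg x` drop below `b`.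
lemma valence_le_of_odd_step (hab : a < b) (hH : IsOptimal G a b H) (hu : valence H u < a)
    (ih : ∀ K, IsOptimal G a b K → valence K u < a → ValenceAlternates G K a b u k)
    (hk : Odd k) (hx : AltReachable G H u k x) (hxv : H.Adj x v) : valence H v ≤ a := by
  by_contra! hva
  have hxb : valence H x = b := (ih H hH hu k le_rfl x hx).2 hk
  have hux : u ≠ x := by rintro rfl; lia
  have huv : u ≠ v := by rintro rfl; lia
  have hdeg := (ih _ (hH.sdiff_edge hxv (hxb ▸ hab) hva)
    ((valence_sdiff_edge_of_ne hxv hux huv).trans_lt hu) k le_rfl x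
    (hx.of_agree_off_edge (ih H hH hu) (.inr ⟨hxb ▸ hab, hva⟩)
      fun _ _ => sdiff_edge_adj_iff_of_ne)).2 hk
  have := valence_sdiff_edge_left hxv
  lia

lemma valenceAlternates (hab : a < b) (hH : IsOptimal G a b H) (hu : valence H u < a) (k : ℕ) :
    ValenceAlternates G H a b u k := by
  induction k generalizing H with
  | zero =>
    rintro j hj v hv
    obtain rfl := Nat.le_zero.1 hj
    cases hv
    exact ⟨fun _ => hu.le, fun h => absurd h (by decide)⟩
  | succ k ih =>
    intro j hj v hv
    obtain hj | rfl := Nat.le_succ_iff.1 hj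
    · exact ih hH hu j hj v hv
    cases hv with
    | step hx hG hadj =>
      rw [Nat.even_add_one, Nat.odd_add_one, Nat.not_even_iff_odd, Nat.not_odd_iff_even]
      exact ⟨fun hk => hH.valence_le_of_odd_step hab hu (fun K => ih) hk hx (hadj.2 hk),
        fun hk => hH.valence_eq_of_even_step hab hu (fun K => ih) hk hx hG
          (mt hadj.1 (Nat.not_odd_iff_even.2 hk))⟩

lemma exists_valence_lt (hH : IsOptimal G a b H) (hG : ¬ G.HasABFactor a b) :
    ∃ u, valence H u < a := by
  by_contra! hge
  classical
  exact hG ⟨H, hH.le, fun v =>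
    ⟨(hge v).trans_eq valence_eq_degree, valence_eq_degree.symm.trans_le (hH.valence_le v)⟩⟩

end IsOptimal

variable [DecidableEq V] [DecidableRel G.Adj] {S T : Finset V}

variable (G) in
/-- A Tutte-type obstruction to an `[a,b]`-factor: in any spanning subgraph with degrees at most
`b`, the vertices of `T` cannot all reach degree `a`, as they receive at most `b * #S` edges
from `S` and `∑ v ∈ T, #(N(v) \ S)` edges from outside `S`. -/
structure IsBarrier (a b : ℕ) (S T : Finset V) : Prop where
  disjoint : Disjoint S T
  lt : b * #S + ∑ v ∈ T, #(G.neighborFinset v \ S) < a * #T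

lemma mul_card_eq_sum_of_valence_eq [DecidableRel H.Adj] (hS : ∀ v ∈ S, valence H v = b)
    (hST : ∀ v ∈ S, ∀ w, H.Adj v w → w ∈ T) :
    b * #S = ∑ v ∈ T, #(H.neighborFinset v ∩ S) := by
  calc b * #S = ∑ v ∈ S, #(T.bipartiteAbove H.Adj v) := by
        rw [mul_comm]
        refine (sum_const_nat fun v hv => ?_).symm
        rw [← hS v hv, valence_eq_degree, ← SimpleGraph.card_neighborFinset_eq_degree]
        congr 1
        ext w
        simpa [bipartiteAbove] using hST v hv w
    _ = ∑ v ∈ T, #(S.bipartiteBelow H.Adj v) :=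
        sum_card_bipartiteAbove_eq_sum_card_bipartiteBelow _
    _ = ∑ v ∈ T, #(H.neighborFinset v ∩ S) := by
        refine sum_congr rfl fun v _ => congrArg card ?_
        ext w
        simp [bipartiteBelow, SimpleGraph.adj_comm, and_comm]

lemma mul_card_add_sum_le_sum_valence (hS : ∀ v ∈ S, valence H v = b)
    (hST : ∀ v ∈ S, ∀ w, H.Adj v w → w ∈ T)
    (hTS : ∀ v ∈ T, ∀ w, G.Adj v w → ¬ H.Adj v w → w ∈ S) :
    b * #S + ∑ v ∈ T, #(G.neighborFinset v \ S) ≤ ∑ v ∈ T, valence H v := by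
  classical
  rw [mul_card_eq_sum_of_valence_eq hS hST, ← sum_add_distrib]
  refine sum_le_sum fun v hv => ?_
  rw [valence_eq_degree, ← SimpleGraph.card_neighborFinset_eq_degree,
    ← card_inter_add_card_sdiff (H.neighborFinset v) S]
  refine Nat.add_le_add_left (card_le_card fun w => ?_) _
  simp only [mem_sdiff, SimpleGraph.mem_neighborFinset]
  exact fun ⟨hvw, hw⟩ => ⟨by_contra fun hn => hw (hTS v hv w hvw hn), hw⟩

-- In an optimal subgraph, take for `S` and `T` the vertices at the end of alternating walks of
-- odd and even length from a vertex of degree less than `a`.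
theorem exists_isBarrier (hab : a < b) (hG : ¬ G.HasABFactor a b) :
    ∃ S T, IsBarrier G a b S T := by
  classical
  obtain ⟨H, hH⟩ := exists_isOptimal G a b
  obtain ⟨u, hu⟩ := hH.exists_valence_lt hG
  let S : Finset V := {v | ∃ k, Odd k ∧ AltReachable G H u k v}
  let T : Finset V := {v | ∃ k, Even k ∧ AltReachable G H u k v}
  have hS : ∀ v ∈ S, valence H v = b := by
    intro v hv
    obtain ⟨k, hk, hv⟩ := (mem_filter_univ v).1 hv
    exact (hH.valenceAlternates hab hu k k le_rfl v hv).2 hk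
  have hT : ∀ v ∈ T, valence H v ≤ a := by
    intro v hv
    obtain ⟨k, hk, hv⟩ := (mem_filter_univ v).1 hv
    exact (hH.valenceAlternates hab hu k k le_rfl v hv).1 hk
  have hST : ∀ v ∈ S, ∀ w, H.Adj v w → w ∈ T := by
    intro v hv w hvw
    obtain ⟨k, hk, hv⟩ := (mem_filter_univ v).1 hv
    exact (mem_filter_univ w).2 ⟨k + 1, hk.add_one, hv.step (hH.le hvw) (iff_of_true hvw hk)⟩
  have hTS : ∀ v ∈ T, ∀ w, G.Adj v w → ¬ H.Adj v w → w ∈ S := by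
    intro v hv w hvw hn
    obtain ⟨k, hk, hv⟩ := (mem_filter_univ v).1 hv
    exact (mem_filter_univ w).2
      ⟨k + 1, hk.add_one, hv.step hvw (iff_of_false hn (Nat.not_odd_iff_even.2 hk))⟩
  refine ⟨S, T, disjoint_left.2 fun v hvS hvT => ?_, ?_⟩
  · exact hab.not_ge (hS v hvS ▸ hT v hvT)
  calc b * #S + ∑ v ∈ T, #(G.neighborFinset v \ S) ≤ ∑ v ∈ T, valence H v :=
        mul_card_add_sum_le_sum_valence hS hST hTS
    _ < ∑ _v ∈ T, a := sum_lt_sum hT ⟨u, (mem_filter_univ u).2 ⟨0, Even.zero, .zero⟩, hu⟩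
    _ = a * #T := by rw [sum_const, smul_eq_mul, mul_comm]

namespace IsBarrier

lemma mul_card_add_sum_degree_lt (h : IsBarrier G a b S T) :
    b * #S + ∑ v ∈ T, G.degree v < #T * #S + a * #T := by
  have hdeg : ∑ v ∈ T, G.degree v ≤ #T * #S + ∑ v ∈ T, #(G.neighborFinset v \ S) := by
    rw [← smul_eq_mul, ← sum_const, ← sum_add_distrib]
    refine sum_le_sum fun v _ => ?_
    rw [← SimpleGraph.card_neighborFinset_eq_degree, ← card_inter_add_card_sdiff _ S]
    exact Nat.add_le_add_right (card_le_card inter_subset_right) _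
  have := h.lt
  lia

lemma lt_card_right (h : IsBarrier G a b S T) (hδ : ∀ v, a ≤ G.degree v) : b < #T := by
  have hlt := h.mul_card_add_sum_degree_lt
  have hsum : #T * a ≤ ∑ v ∈ T, G.degree v := card_nsmul_le_sum T _ a fun v _ => hδ v
  exact lt_of_mul_lt_mul_right (by lia : b * #S < #T * #S) (Nat.zero_le _)

lemma card_left_le (h : IsBarrier G a b S T) (hab : a ≤ b) (hT : #T = b + 1) : #S ≤ a := by
  have hlt := h.lt
  rw [hT] at hlt
  exact Nat.le_of_lt_succ (lt_of_mul_lt_mul_left (by lia : b * #S < b * (a + 1)) (Nat.zero_le b))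

end IsBarrier

end Barrier

section Bounds

variable {V : Type*} [Fintype V] [DecidableEq V] {G : SimpleGraph V} [DecidableRel G.Adj]
  {C T : Finset V} {x : V → ℝ}

lemma sum_sum_neighborFinset_inter (C T : Finset V) (f : V → ℝ) :
    ∑ w ∈ C, ∑ v ∈ G.neighborFinset w ∩ T, f v = ∑ v ∈ T, #(G.neighborFinset v ∩ C) * f v := by
  simp only [← nsmul_eq_mul, ← sum_const]
  refine sum_comm' fun w v => ?_
  simp only [mem_inter, SimpleGraph.mem_neighborFinset, G.adj_comm w v]
  tauto

lemma sum_neighborFinset_inter_add (C : Finset V) (f : V → ℝ) (v : V) :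
    ∑ u ∈ G.neighborFinset v ∩ C, f u + ∑ u ∈ G.neighborFinset v ∩ Cᶜ, f u =
      ∑ u ∈ G.neighborFinset v, f u := by
  rw [← sdiff_eq_inter_compl, sum_inter_add_sum_sdiff]

lemma neighborFinset_inter_subset_erase (C : Finset V) (v : V) :
    G.neighborFinset v ∩ C ⊆ C.erase v := fun u hu => by
  rw [mem_inter, SimpleGraph.mem_neighborFinset] at hu
  exact mem_erase.2 ⟨hu.1.ne', hu.2⟩

lemma card_neighborFinset_inter_le_degree (C : Finset V) (v : V) :
    #(G.neighborFinset v ∩ C) ≤ G.degree v :=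
  (card_le_card inter_subset_left).trans_eq (G.card_neighborFinset_eq_degree v)

lemma IsPerronVector.mul_le_degree_mul {M : ℝ} (hx : IsPerronVector G x) (hM : ∀ v, x v ≤ M)
    (v : V) : G.spectralRadius * x v ≤ G.degree v * M := by
  rw [← hx.sum_neighborFinset, ← G.card_neighborFinset_eq_degree, ← nsmul_eq_mul]
  exact sum_le_card_nsmul _ _ _ fun u _ => hM u

/-! ### Hong's bound -/

variable (G) in
lemma exists_sq_spectralRadius_le_sum_degree [Nonempty V] :
    ∃ v, G.spectralRadius ^ 2 ≤ ∑ u ∈ G.neighborFinset v, (G.degree u : ℝ) := by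
  obtain ⟨x, hx⟩ := exists_isPerronVector G
  obtain ⟨m, hm_pos, hm⟩ := hx.exists_forall_le_and_pos
  refine ⟨m, le_of_mul_le_mul_right ?_ hm_pos⟩
  calc G.spectralRadius ^ 2 * x m
      = ∑ u ∈ G.neighborFinset m, G.spectralRadius * x u := by
        rw [← mul_sum, hx.sum_neighborFinset]; ring
    _ ≤ ∑ u ∈ G.neighborFinset m, G.degree u * x m :=
        sum_le_sum fun u _ => hx.mul_le_degree_mul hm u
    _ = (∑ u ∈ G.neighborFinset m, (G.degree u : ℝ)) * x m := (sum_mul ..).symm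

omit [DecidableEq V] in
lemma sum_degree_neighborFinset_add_card_le (hδ : ∀ v, 1 ≤ G.degree v) (v : V) :
    ∑ u ∈ G.neighborFinset v, G.degree u + Fintype.card V ≤ ∑ u, G.degree u + 1 := by
  classical
  have hv : v ∈ (G.neighborFinset v)ᶜ := by simp
  have hcompl : #((G.neighborFinset v)ᶜ.erase v) ≤
      ∑ u ∈ (G.neighborFinset v)ᶜ.erase v, G.degree u := by
    rw [card_eq_sum_ones]
    exact sum_le_sum fun u _ => hδ u
  have hcard := card_add_card_compl (G.neighborFinset v)
  rw [G.card_neighborFinset_eq_degree] at hcard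
  rw [← sum_add_sum_compl (G.neighborFinset v), ← add_sum_erase _ _ hv]
  have := card_erase_add_one hv
  lia

lemma sq_spectralRadius_add_card_le [Nonempty V] (hδ : ∀ v, 1 ≤ G.degree v) :
    G.spectralRadius ^ 2 + Fintype.card V ≤ ∑ v, (G.degree v : ℝ) + 1 := by
  obtain ⟨v, hv⟩ := exists_sq_spectralRadius_le_sum_degree G
  have := sum_degree_neighborFinset_add_card_le hδ v
  calc G.spectralRadius ^ 2 + Fintype.card V
      ≤ ∑ u ∈ G.neighborFinset v, (G.degree u : ℝ) + Fintype.card V := by gcongr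
    _ ≤ ∑ v, (G.degree v : ℝ) + 1 := mod_cast this

variable (G) in
lemma sum_degree_add_card_compl_le (T : Finset V) :
    ∑ v, G.degree v + #Tᶜ ≤ #Tᶜ ^ 2 + 2 * ∑ v ∈ T, G.degree v := by
  have hin : ∑ v ∈ Tᶜ, (#(G.neighborFinset v ∩ Tᶜ) + 1) ≤ #Tᶜ ^ 2 := by
    rw [sq, ← smul_eq_mul]
    refine sum_le_card_nsmul _ _ _ fun v hv => ?_
    rw [← card_erase_add_one hv]
    gcongr
    exact neighborFinset_inter_subset_erase _ _
  have hcross : ∑ v ∈ Tᶜ, #(G.neighborFinset v ∩ T) ≤ ∑ v ∈ T, G.degree v := by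
    have := sum_sum_neighborFinset_inter (G := G) Tᶜ T 1
    simp only [Pi.one_apply, sum_const, nsmul_eq_mul, mul_one] at this
    norm_cast at this
    rw [this]
    exact sum_le_sum fun v _ => card_neighborFinset_inter_le_degree _ _
  have hdeg : ∀ v, G.degree v = #(G.neighborFinset v ∩ T) + #(G.neighborFinset v ∩ Tᶜ) := by
    intro v
    rw [← sdiff_eq_inter_compl, card_inter_add_card_sdiff, G.card_neighborFinset_eq_degree]
  rw [← sum_add_sum_compl T, sum_congr rfl fun v (_ : v ∈ Tᶜ) => hdeg v]
  rw [sum_add_distrib, sum_const, smul_eq_mul, mul_one] at hin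
  rw [sum_add_distrib]
  lia

/-! ### A lower bound from a clique -/

lemma neighborFinset_inter_eq_erase (hC : G.IsClique C) {v : V} (hv : v ∈ C) :
    G.neighborFinset v ∩ C = C.erase v := by
  refine (neighborFinset_inter_subset_erase C v).antisymm fun u hu => ?_
  obtain ⟨huv, hu⟩ := mem_erase.1 hu
  exact mem_inter.2 ⟨(G.mem_neighborFinset v u).2 (hC hv hu huv.symm), hu⟩

lemma clique_le_sum_mul_sum_neighborFinset (hC : G.IsClique C) {s : ℝ} (hx : ∀ v, 0 ≤ x v)
    (hxC : ∀ v ∈ C, x v = s) :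
    #C * (#C - 1) * s ^ 2 + 2 * s * ∑ v ∈ Cᶜ, #(G.neighborFinset v ∩ C) * x v ≤
      ∑ v, x v * ∑ u ∈ G.neighborFinset v, x u := by
  have hinner : ∀ v, ∑ u ∈ G.neighborFinset v ∩ C, x u = s * #(G.neighborFinset v ∩ C) :=
    fun v => by
      rw [sum_congr rfl fun u hu => hxC u (mem_inter.1 hu).2, sum_const, nsmul_eq_mul, mul_comm]
  have hclique : ∑ v ∈ C, x v * ∑ u ∈ G.neighborFinset v, x u =
      #C * (#C - 1) * s ^ 2 + s * ∑ v ∈ Cᶜ, #(G.neighborFinset v ∩ C) * x v := by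
    calc ∑ v ∈ C, x v * ∑ u ∈ G.neighborFinset v, x u
        = s * (∑ v ∈ C, s * (#C - 1) + ∑ v ∈ C, ∑ u ∈ G.neighborFinset v ∩ Cᶜ, x u) := by
          rw [← sum_add_distrib, mul_sum]
          exact sum_congr rfl fun v hv => by
            rw [hxC v hv, ← sum_neighborFinset_inter_add C, hinner,
              neighborFinset_inter_eq_erase hC hv, cast_card_erase_of_mem hv]
      _ = _ := by
          rw [sum_sum_neighborFinset_inter, sum_const, nsmul_eq_mul]
          ring
  have hrest : s * ∑ v ∈ Cᶜ, #(G.neighborFinset v ∩ C) * x v ≤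
      ∑ v ∈ Cᶜ, x v * ∑ u ∈ G.neighborFinset v, x u := by
    rw [mul_sum]
    refine sum_le_sum fun v _ => ?_
    calc s * (#(G.neighborFinset v ∩ C) * x v) = x v * ∑ u ∈ G.neighborFinset v ∩ C, x u := by
          rw [hinner]; ring
      _ ≤ x v * ∑ u ∈ G.neighborFinset v, x u := mul_le_mul_of_nonneg_left
          (sum_le_sum_of_subset_of_nonneg inter_subset_left fun u _ _ => hx u) (hx v)
  rw [← sum_add_sum_compl C, hclique]
  linarith

-- Rayleigh's principle for the vector equal to `s` on `C` and to `f` off `C`.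
lemma clique_le_spectralRadius_mul (hC : G.IsClique C) {s : ℝ} (hs : 0 ≤ s) {f : V → ℝ}
    (hf : ∀ v, 0 ≤ f v) :
    #C * (#C - 1) * s ^ 2 + 2 * s * ∑ v ∈ Cᶜ, #(G.neighborFinset v ∩ C) * f v ≤
      G.spectralRadius * (#C * s ^ 2 + ∑ v ∈ Cᶜ, f v ^ 2) := by
  let x : V → ℝ := C.piecewise (fun _ => s) f
  have hx : ∀ v, 0 ≤ x v := fun v => by by_cases hv : v ∈ C <;> simp [x, hv, hs, hf]
  have hxC : ∀ v ∈ C, x v = s := fun v hv => piecewise_eq_of_mem _ _ _ hv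
  have hxf : ∀ v ∈ Cᶜ, f v = x v := fun v hv =>
    (piecewise_eq_of_notMem _ _ _ (mem_compl.1 hv)).symm
  have hnorm : x ⬝ᵥ x = #C * s ^ 2 + ∑ v ∈ Cᶜ, f v ^ 2 := by
    simp only [dotProduct, ← sq]
    rw [← sum_add_sum_compl C, sum_congr rfl fun v hv => by rw [hxC v hv], sum_const, nsmul_eq_mul,
      sum_congr rfl fun v hv => by rw [← hxf v hv]]
  rw [← hnorm, sum_congr rfl fun v hv => by rw [hxf v hv]]
  refine le_trans ?_ (dotProduct_adjMatrix_mulVec_le G x)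
  simpa only [dotProduct, SimpleGraph.adjMatrix_mulVec_apply] using
    clique_le_sum_mul_sum_neighborFinset hC hx hxC

omit [DecidableRel G.Adj] in
lemma card_sub_one_le_spectralRadius (hC : G.IsClique C) (hne : C.Nonempty) :
    (#C : ℝ) - 1 ≤ G.spectralRadius := by
  classical
  have hpos : (0 : ℝ) < #C := mod_cast hne.card_pos
  have := clique_le_spectralRadius_mul hC zero_le_one (f := 0) fun _ => le_rfl
  simp only [Pi.zero_apply, mul_zero, sum_const_zero, ne_eq, OfNat.ofNat_ne_zero,
    not_false_eq_true, zero_pow] at this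
  refine le_of_mul_le_mul_left ?_ hpos
  linarith

lemma sum_sq_card_neighborFinset_inter_le (hC : G.IsClique C) (hρ : 0 < G.spectralRadius) :
    ∑ v ∈ Cᶜ, (#(G.neighborFinset v ∩ C) : ℝ) ^ 2 ≤
      G.spectralRadius * #C * (G.spectralRadius + 1 - #C) := by
  have := clique_le_spectralRadius_mul hC hρ.le (f := fun v => #(G.neighborFinset v ∩ C))
    fun v => Nat.cast_nonneg _
  simp only [← sq] at this
  refine le_of_mul_le_mul_left ?_ hρ
  linarith

/-! ### An upper bound from a set of vertices of low degree -/

namespace IsPerronVector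

lemma add_one_mul_le (hx : IsPerronVector G x) {w : V} (hw : w ∉ T) :
    (G.spectralRadius + 1) * x w ≤ ∑ v ∈ Tᶜ, x v + ∑ v ∈ G.neighborFinset w ∩ T, x v := by
  have hle : ∑ v ∈ G.neighborFinset w ∩ Tᶜ, x v ≤ ∑ v ∈ Tᶜ.erase w, x v :=
    sum_le_sum_of_subset_of_nonneg (neighborFinset_inter_subset_erase _ _) fun v _ _ => hx.nonneg v
  rw [add_one_mul, ← hx.sum_neighborFinset, ← sum_neighborFinset_inter_add T,
    ← add_sum_erase _ x (mem_compl.2 hw)]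
  linarith

lemma mul_sum_compl_le (hx : IsPerronVector G x) :
    (G.spectralRadius + 1 - #Tᶜ) * ∑ v ∈ Tᶜ, x v ≤ ∑ v ∈ T, G.degree v * x v := by
  have hsum : (G.spectralRadius + 1) * ∑ v ∈ Tᶜ, x v ≤
      #Tᶜ * ∑ v ∈ Tᶜ, x v + ∑ v ∈ T, #(G.neighborFinset v ∩ Tᶜ) * x v := by
    rw [← sum_sum_neighborFinset_inter, mul_sum, ← nsmul_eq_mul, ← sum_const, ← sum_add_distrib]
    exact sum_le_sum fun w hw => hx.add_one_mul_le (mem_compl.1 hw)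
  have hdeg : ∑ v ∈ T, #(G.neighborFinset v ∩ Tᶜ) * x v ≤ ∑ v ∈ T, G.degree v * x v :=
    sum_le_sum fun v _ => mul_le_mul_of_nonneg_right
      (mod_cast card_neighborFinset_inter_le_degree _ _) (hx.nonneg v)
  linarith

variable {m : V}

lemma notMem_of_forall_degree_lt (hx : IsPerronVector G x) (hm_pos : 0 < x m)
    (hm : ∀ v, x v ≤ x m) (hT : ∀ v ∈ T, (G.degree v : ℝ) < G.spectralRadius) : m ∉ T :=
  fun hmT => (hT m hmT).not_ge (le_of_mul_le_mul_right (hx.mul_le_degree_mul hm m) hm_pos)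

lemma mul_apply_le_mul_sum_compl (hx : IsPerronVector G x) (hρ : 0 ≤ G.spectralRadius)
    (hm : ∀ v, x v ≤ x m) (hmT : m ∉ T) :
    (G.spectralRadius ^ 2 + G.spectralRadius - ∑ v ∈ T, (G.degree v : ℝ)) * x m ≤
      G.spectralRadius * ∑ v ∈ Tᶜ, x v := by
  have hT : G.spectralRadius * ∑ v ∈ G.neighborFinset m ∩ T, x v ≤
      (∑ v ∈ T, (G.degree v : ℝ)) * x m := by
    calc G.spectralRadius * ∑ v ∈ G.neighborFinset m ∩ T, x v
        ≤ G.spectralRadius * ∑ v ∈ T, x v := mul_le_mul_of_nonneg_left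
          (sum_le_sum_of_subset_of_nonneg inter_subset_right fun v _ _ => hx.nonneg v) hρ
      _ ≤ (∑ v ∈ T, (G.degree v : ℝ)) * x m := by
          rw [mul_sum, sum_mul]
          exact sum_le_sum fun v _ => hx.mul_le_degree_mul hm v
  have := mul_le_mul_of_nonneg_left (hx.add_one_mul_le hmT) hρ
  linarith

lemma mul_mul_sum_compl_le (hx : IsPerronVector G x) (hρ : 0 ≤ G.spectralRadius)
    (hm : ∀ v, x v ≤ x m) :
    (G.spectralRadius + 1 - #Tᶜ) * (G.spectralRadius * ∑ v ∈ Tᶜ, x v) ≤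
      (∑ v ∈ T, (G.degree v : ℝ) ^ 2) * x m := by
  calc (G.spectralRadius + 1 - #Tᶜ) * (G.spectralRadius * ∑ v ∈ Tᶜ, x v)
      = G.spectralRadius * ((G.spectralRadius + 1 - #Tᶜ) * ∑ v ∈ Tᶜ, x v) := by ring
    _ ≤ G.spectralRadius * ∑ v ∈ T, G.degree v * x v :=
        mul_le_mul_of_nonneg_left hx.mul_sum_compl_le hρ
    _ = ∑ v ∈ T, G.degree v * (G.spectralRadius * x v) := by
        rw [mul_sum]; exact sum_congr rfl fun v _ => by ring
    _ ≤ ∑ v ∈ T, G.degree v * (G.degree v * x m) :=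
        sum_le_sum fun v _ => mul_le_mul_of_nonneg_left (hx.mul_le_degree_mul hm v) (by positivity)
    _ = (∑ v ∈ T, (G.degree v : ℝ) ^ 2) * x m := by
        rw [sum_mul]; exact sum_congr rfl fun v _ => by ring

end IsPerronVector

-- Compare the largest entry of a Perron vector, attained off `T`, with the sum of its entries
-- off `T`.
lemma mul_le_sum_sq_degree [Nonempty V] (hρ : 0 < G.spectralRadius)
    (hT : ∀ v ∈ T, (G.degree v : ℝ) < G.spectralRadius)
    (hsum : ∑ v ∈ T, (G.degree v : ℝ) < G.spectralRadius ^ 2 + G.spectralRadius) :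
    (G.spectralRadius + 1 - #Tᶜ) *
        (G.spectralRadius ^ 2 + G.spectralRadius - ∑ v ∈ T, (G.degree v : ℝ)) ≤
      ∑ v ∈ T, (G.degree v : ℝ) ^ 2 := by
  obtain ⟨x, hx⟩ := exists_isPerronVector G
  obtain ⟨m, hm_pos, hm⟩ := hx.exists_forall_le_and_pos
  obtain hneg | hnonneg := le_total (G.spectralRadius + 1 - #Tᶜ) 0
  · exact (mul_nonpos_of_nonpos_of_nonneg hneg (sub_nonneg.2 hsum.le)).trans (by positivity)
  have hmT := hx.notMem_of_forall_degree_lt hm_pos hm hT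
  refine le_of_mul_le_mul_right ?_ hm_pos
  rw [mul_assoc]
  exact (mul_le_mul_of_nonneg_left (hx.mul_apply_le_mul_sum_compl hρ.le hm hmT) hnonneg).trans
    (hx.mul_mul_sum_compl_le hρ.le hm)

end Bounds

section Extremal

variable {n a b : ℕ}

lemma Hgraph_adj {i j : Fin n} : (Hgraph n a b).Adj i j ↔ i ≠ j ∧
    (((i : ℕ) < a ∨ ((i : ℕ) < n - b - 1 ∧ (j : ℕ) < n - b - 1) ∨
      ((i : ℕ) = n - b - 1 ∧ a ≤ (j : ℕ) ∧ (j : ℕ) < 2 * a - 1)) ∨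
    ((j : ℕ) < a ∨ ((j : ℕ) < n - b - 1 ∧ (i : ℕ) < n - b - 1) ∨
      ((j : ℕ) = n - b - 1 ∧ a ≤ (i : ℕ) ∧ (i : ℕ) < 2 * a - 1))) :=
  SimpleGraph.fromRel_adj _ _ _

lemma Hgraph_connected (ha : 0 < a) (hn : 0 < n) : (Hgraph n a b).Connected := by
  refine SimpleGraph.connected_iff_exists_forall_reachable _ |>.2 ⟨⟨0, hn⟩, fun i => ?_⟩
  obtain rfl | hi := eq_or_ne i ⟨0, hn⟩
  · exact .rfl
  · exact (Hgraph_adj.2 ⟨hi.symm, .inl (.inl ha)⟩).reachable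

/-- The clique `K_{n-b-1}` of `H_n^{a,b}` spanned by its `K_a` and its `K_{n-a-b-1}`. -/
def Hclique (n b : ℕ) : Finset (Fin n) := {i | (i : ℕ) < n - b - 1}

lemma mem_Hclique {i : Fin n} : i ∈ Hclique n b ↔ (i : ℕ) < n - b - 1 := mem_filter_univ i

lemma card_Hclique (hn : b < n) : (#(Hclique n b) : ℝ) = n - b - 1 := by
  rw [Hclique, Fin.card_filter_val_lt, min_eq_right (by lia), Nat.sub_sub, Nat.cast_sub hn]
  push_cast
  ring

lemma isClique_Hclique : (Hgraph n a b).IsClique (Hclique n b) := fun _ hi _ hj hij =>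
  Hgraph_adj.2 ⟨hij, .inl (.inr (.inl ⟨mem_Hclique.1 hi, mem_Hclique.1 hj⟩))⟩

lemma sub_le_spectralRadius_Hgraph (hn : b + 2 ≤ n) :
    (n : ℝ) - b - 2 ≤ (Hgraph n a b).spectralRadius := by
  have hne : (Hclique n b).Nonempty := ⟨⟨0, by lia⟩, mem_Hclique.2 (by simp only; lia)⟩
  have := card_sub_one_le_spectralRadius isClique_Hclique hne (G := Hgraph n a b)
  rw [card_Hclique (by lia)] at this
  linarith

section

variable [DecidableRel (Hgraph n a b).Adj]

lemma le_card_neighborFinset_inter_Hclique {k : ℕ} (hkn : k ≤ n - b - 1) {i : Fin n}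
    (hi : i ∉ Hclique n b) (hadj : ∀ j : Fin n, (j : ℕ) < k → i ≠ j → (Hgraph n a b).Adj i j) :
    k ≤ #((Hgraph n a b).neighborFinset i ∩ Hclique n b) := by
  calc k = #{j : Fin n | (j : ℕ) < k} := by rw [Fin.card_filter_val_lt]; lia
    _ ≤ _ := card_le_card fun j hj => by
      have hj := (mem_filter_univ j).1 hj
      have hjC : j ∈ Hclique n b := mem_Hclique.2 (hj.trans_le hkn)
      exact mem_inter.2 ⟨(SimpleGraph.mem_neighborFinset ..).2
        (hadj j hj (ne_of_mem_of_not_mem hjC hi).symm), hjC⟩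

lemma le_sum_sq_card_neighborFinset_inter_Hclique (ha : 0 < a) (hn : 2 * a + b ≤ n) :
    (b : ℝ) * a ^ 2 + (2 * a - 1) ^ 2 ≤
      ∑ i ∈ (Hclique n b)ᶜ, (#((Hgraph n a b).neighborFinset i ∩ Hclique n b) : ℝ) ^ 2 := by
  have ha' : (1 : ℝ) ≤ a := mod_cast ha
  have hcard : (#(Hclique n b)ᶜ : ℝ) = b + 1 := by
    rw [card_compl, Nat.cast_sub (card_le_univ _), card_Hclique (by lia), Fintype.card_fin]
    ring
  let i₀ : Fin n := ⟨n - b - 1, by lia⟩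
  have hi₀ : i₀ ∈ (Hclique n b)ᶜ := by simp [i₀, mem_Hclique]
  have hspecial : 2 * (a : ℝ) - 1 ≤ #((Hgraph n a b).neighborFinset i₀ ∩ Hclique n b) := by
    have := le_card_neighborFinset_inter_Hclique (a := a) (k := 2 * a - 1) (by lia)
      (mem_compl.1 hi₀) fun j hj hne => Hgraph_adj.2 ⟨hne, by simp only [i₀]; lia⟩
    rw [sub_le_iff_le_add]
    exact_mod_cast (show 2 * a ≤ _ + 1 by lia)
  have hother : ∀ i ∈ (Hclique n b)ᶜ,
      (a : ℝ) ≤ #((Hgraph n a b).neighborFinset i ∩ Hclique n b) := fun i hi =>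
    mod_cast le_card_neighborFinset_inter_Hclique (by lia) (mem_compl.1 hi)
      fun j hj hne => Hgraph_adj.2 ⟨hne, .inr (.inl hj)⟩
  have hsum := card_nsmul_le_sum ((Hclique n b)ᶜ.erase i₀) _ ((a : ℝ) ^ 2) fun i hi =>
    pow_le_pow_left₀ a.cast_nonneg (hother i (mem_of_mem_erase hi)) 2
  rw [nsmul_eq_mul, cast_card_erase_of_mem hi₀, hcard, add_sub_cancel_right] at hsum
  rw [← add_sum_erase _ _ hi₀, add_comm]
  exact add_le_add (pow_le_pow_left₀ (by linarith) hspecial 2) hsum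

end

lemma le_spectralRadius_Hgraph_mul (ha : 0 < a) (hn : 2 * a + b < n) :
    (b : ℝ) * a ^ 2 + (2 * a - 1) ^ 2 ≤ (Hgraph n a b).spectralRadius * (n - b - 1) *
      ((Hgraph n a b).spectralRadius + 1 - (n - b - 1)) := by
  classical
  have hpos : 0 < (Hgraph n a b).spectralRadius := by
    have hlt : (b : ℝ) + 2 < n := mod_cast (by lia : b + 2 < n)
    linarith [sub_le_spectralRadius_Hgraph (a := a) (b := b) (n := n) (by lia)]
  rw [← card_Hclique (by lia)]
  exact (le_sum_sq_card_neighborFinset_inter_Hclique ha hn.le).trans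
    (sum_sq_card_neighborFinset_inter_le isClique_Hclique hpos)

variable {V : Type*} [Fintype V]

-- Sort the vertices by the number of members of the chain that miss them.
lemma exists_equiv_fin_lt_card_iff_mem {m : ℕ} (hcard : Fintype.card V = n)
    {F : Fin m → Finset V} (hF : Monotone F) :
    ∃ e : V ≃ Fin n, ∀ k v, (e v : ℕ) < #(F k) ↔ v ∈ F k := by
  classical
  let f : V → ℕ := fun v => #{k | v ∉ F k}
  have hf : ∀ (k : Fin m) v, f v ≤ k ↔ v ∈ F k := fun k v => by
    rw [← not_lt, Fin.lt_card_filter_univ_iff_apply_of_imp (v ∉ F ·), not_not]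
    exact fun i j hij => mt (hF hij ·)
  let e₀ := Fintype.equivFinOfCardEq hcard
  let σ := Tuple.sort (f ∘ e₀.symm)
  refine ⟨e₀.trans σ.symm, fun k v => ?_⟩
  have hFk : #(F k) = #{i | ((f ∘ e₀.symm) ∘ σ) i ≤ k} :=
    card_equiv (e₀.trans σ.symm) fun v => by simp [hf]
  rw [hFk, Tuple.lt_card_le_iff_apply_le_of_monotone (Tuple.monotone_sort (f ∘ e₀.symm))]
  simp [σ, hf]

variable {S T : Finset V} {v₁ : V}

lemma exists_equiv_fin_of_subset_of_disjoint {A : Finset V} (hcard : Fintype.card V = n)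
    (hSA : S ⊆ A) (hAT : Disjoint A T) (hv₁ : v₁ ∈ T) :
    ∃ e : V ≃ Fin n, (∀ v, (e v : ℕ) < #S ↔ v ∈ S) ∧ (∀ v, (e v : ℕ) < #A ↔ v ∈ A) ∧
      (∀ v, (e v : ℕ) < n - #T ↔ v ∉ T) ∧ (e v₁ : ℕ) = n - #T := by
  classical
  have hchain : Monotone ![S, A, Tᶜ, insert v₁ Tᶜ] := by
    refine Fin.monotone_iff_le_succ.2 fun k => ?_
    fin_cases k
    exacts [hSA, subset_compl_iff_disjoint_right.2 hAT, subset_insert _ _]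
  have hTc : #Tᶜ = n - #T := by rw [card_compl, hcard]
  have hinsert : #(insert v₁ Tᶜ) = n - #T + 1 := by
    rw [card_insert_of_notMem (by simpa using hv₁), hTc]
  obtain ⟨e, he⟩ := exists_equiv_fin_lt_card_iff_mem hcard hchain
  have heT : ∀ v, (e v : ℕ) < n - #T ↔ v ∉ T := fun v => by
    rw [← hTc, ← mem_compl]; exact he 2 v
  refine ⟨e, he 0, he 1, heT, le_antisymm ?_ (not_lt.1 fun hlt => (heT v₁).1 hlt hv₁)⟩
  rw [← Nat.lt_succ_iff, Nat.succ_eq_add_one, ← hinsert]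
  exact (he 3 v₁).2 (mem_insert_self _ _)

variable [DecidableEq V] {G : SimpleGraph V} [DecidableRel G.Adj]

lemma exists_le_comap_Hgraph (hcard : Fintype.card V = n) (hST : Disjoint S T) (hS : #S = a)
    (hT : #T = b + 1) (hv₁ : v₁ ∈ T) (hN : ∀ v ∈ T, v ≠ v₁ → G.neighborFinset v ⊆ S)
    (hN₁ : #(G.neighborFinset v₁ \ S) = a - 1) :
    ∃ e : V ≃ Fin n, G ≤ (Hgraph n a b).comap e := by
  have hNT : Disjoint (S ∪ G.neighborFinset v₁) T := by
    refine disjoint_union_left.2 ⟨hST, disjoint_left.2 fun w hw hwT => ?_⟩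
    have hadj := (G.mem_neighborFinset v₁ w).1 hw
    exact disjoint_left.1 hST
      (hN w hwT hadj.ne' ((G.mem_neighborFinset w v₁).2 hadj.symm)) hv₁
  have hSN : #(S ∪ G.neighborFinset v₁) = 2 * a - 1 := by
    rw [← union_sdiff_self_eq_union, card_union_of_disjoint disjoint_sdiff]
    lia
  obtain ⟨e, heS, heN, heT, hev₁⟩ :=
    exists_equiv_fin_of_subset_of_disjoint hcard subset_union_left hNT hv₁
  rw [hS] at heS
  rw [hSN] at heN
  rw [hT, ← Nat.sub_sub] at heT hev₁
  have hadj : ∀ u ∈ T, ∀ v, G.Adj u v → (Hgraph n a b).Adj (e u) (e v) := by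
    intro u hu v huv
    have hvN := (G.mem_neighborFinset u v).2 huv
    refine Hgraph_adj.2 ⟨e.injective.ne huv.ne, ?_⟩
    by_cases hvS : v ∈ S
    · exact .inr (.inl ((heS v).2 hvS))
    obtain rfl : u = v₁ := by_contra fun hne => hvS (hN u hu hne hvN)
    exact .inl (.inr (.inr
      ⟨hev₁, not_lt.1 ((heS v).not.2 hvS), (heN v).2 (mem_union_right _ hvN)⟩))
  refine ⟨e, fun u v huv => ?_⟩
  by_cases hu : u ∈ T
  · exact hadj u hu v huv
  by_cases hv : v ∈ T
  · exact (hadj v hv u huv.symm).symm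
  exact Hgraph_adj.2 ⟨e.injective.ne huv.ne, .inl (.inr (.inl ⟨(heT u).2 hu, (heT v).2 hv⟩))⟩

end Extremal

section Main

variable {V : Type*} [Fintype V] [DecidableEq V] {G : SimpleGraph V} [DecidableRel G.Adj]
  {a b n : ℕ} {S T : Finset V}

/-! ### Barriers with at least `b + 2` vertices in `T` -/

lemma edge_count_lt {a b n s t : ℝ} (ha : 1 ≤ a) (hab : a + 1 ≤ b)
    (hn : 2 * (a + b + 2) * (b + 2) ≤ n) (ht : b + 2 ≤ t) (hs : 0 ≤ s) (hst : s ≤ t)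
    (hstn : s + t ≤ n) :
    (n - t) ^ 2 - (n - t) + 2 * ((t - b) * s + a * t) < (n - b - 2) ^ 2 + n + 1 := by
  obtain h | h := le_total (2 * t) n
  · have hts : (t - b) * s ≤ (t - b) * t := mul_le_mul_of_nonneg_left hst (by linarith)
    have hat : a * t ≤ b * t := mul_le_mul_of_nonneg_right (by linarith) (by linarith)
    have hn' : 2 * (b + 2) * (b + 2) + 2 * (b + 2) ≤ n := by nlinarith
    have hconvex : 0 ≤ (t - (b + 2)) * (2 * n - 3 * (t + (b + 2)) - 1) :=
      mul_nonneg (by linarith) (by nlinarith)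
    nlinarith
  · have hts : (t - b) * s ≤ (t - b) * (n - t) :=
      mul_le_mul_of_nonneg_left (by linarith) (by linarith)
    have hn' : 8 * (a + b + 2) ≤ n := by nlinarith
    have ht' : n / 2 * (n / 2 - 2 * a) ≤ t * (t - 2 * a) :=
      mul_le_mul (by linarith) (by linarith) (by linarith) (by linarith)
    have hquad : 0 ≤ n * (n / 4 - a - 2 * (b + 2)) := mul_nonneg (by linarith) (by linarith)
    have hlin : 0 ≤ (1 + 2 * b) * (n - t) := mul_nonneg (by linarith) (by linarith)
    nlinarith

namespace IsBarrier

lemma card_left_le_card_right (h : IsBarrier G a b S T) (hab : a ≤ b) : #S ≤ #T := by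
  have hlt := h.lt
  have hT : a * #T ≤ b * #T := Nat.mul_le_mul_right _ hab
  exact (lt_of_mul_lt_mul_left (by lia : b * #S < b * #T) (Nat.zero_le b)).le

lemma spectralRadius_lt (h : IsBarrier G a b S T) (ha : 0 < a) (hab : a < b)
    (hcard : Fintype.card V = n) (hn : 2 * (a + b + 2) * (b + 2) ≤ n)
    (hδ : ∀ v, a ≤ G.degree v) (hT : b + 2 ≤ #T) : G.spectralRadius < n - b - 2 := by
  have hTpos : T.Nonempty := card_pos.1 (by lia)
  have : Nonempty V := ⟨hTpos.choose⟩
  have hhong := sq_spectralRadius_add_card_le fun v => ha.trans_le (hδ v)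
  have hdeg : ∑ v, (G.degree v : ℝ) + #Tᶜ ≤ #Tᶜ ^ 2 + 2 * ∑ v ∈ T, (G.degree v : ℝ) :=
    mod_cast sum_degree_add_card_compl_le G T
  have hTdeg : b * (#S : ℝ) + ∑ v ∈ T, (G.degree v : ℝ) + 1 ≤ #T * #S + a * #T :=
    mod_cast h.mul_card_add_sum_degree_lt
  have hTc : (#Tᶜ : ℝ) = n - #T := by rw [card_compl, Nat.cast_sub (card_le_univ T), hcard]
  have hST : #S + #T ≤ n := by
    rw [← card_union_of_disjoint h.disjoint, ← hcard]
    exact card_le_univ _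
  have hcount : ((n : ℝ) - #T) ^ 2 - (n - #T) + 2 * ((#T - b) * #S + a * #T) <
      (n - b - 2) ^ 2 + n + 1 :=
    edge_count_lt (mod_cast ha) (mod_cast hab) (mod_cast hn) (mod_cast hT)
      (Nat.cast_nonneg _) (mod_cast h.card_left_le_card_right hab.le) (mod_cast hST)
  have hnb : (b : ℝ) + 2 ≤ n := mod_cast (by nlinarith : b + 2 ≤ n)
  refine lt_of_pow_lt_pow_left₀ 2 (by linarith) ?_
  rw [hcard] at hhong
  rw [hTc] at hdeg
  linarith

/-! ### Barriers with `b + 1` vertices in `T`, one of them of large degree -/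

lemma sum_degree_lt (h : IsBarrier G a b S T) (hT : #T = b + 1) :
    ∑ v ∈ T, G.degree v < #S + a * (b + 1) := by
  have := h.mul_card_add_sum_degree_lt
  rw [hT] at this
  lia

variable {v₁ : V}

lemma card_left_eq (h : IsBarrier G a b S T) (hab : a ≤ b) (hδ : ∀ v, a ≤ G.degree v)
    (hT : #T = b + 1) (hv₁ : v₁ ∈ T) (hdeg : 2 * a - 1 ≤ G.degree v₁) : #S = a := by
  refine (h.card_left_le hab hT).antisymm ?_
  have hlt := h.sum_degree_lt hT
  have hrest : #(T.erase v₁) * a ≤ ∑ v ∈ T.erase v₁, G.degree v :=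
    card_nsmul_le_sum _ _ a fun v _ => hδ v
  rw [card_erase_of_mem hv₁, hT, Nat.add_sub_cancel] at hrest
  rw [← add_sum_erase _ _ hv₁] at hlt
  lia

-- The barrier inequality leaves room for at most `a - 1` edges from `T` to the outside of `S`,
-- and `v₁` uses all of them.
lemma exists_le_comap_Hgraph (h : IsBarrier G a b S T) (hab : a ≤ b)
    (hcard : Fintype.card V = n) (hδ : ∀ v, a ≤ G.degree v) (hT : #T = b + 1) (hv₁ : v₁ ∈ T)
    (hdeg : 2 * a - 1 ≤ G.degree v₁) : ∃ e : V ≃ Fin n, G ≤ (Hgraph n a b).comap e := by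
  have hS := h.card_left_eq hab hδ hT hv₁ hdeg
  have hlt : #(G.neighborFinset v₁ \ S) + ∑ v ∈ T.erase v₁, #(G.neighborFinset v \ S) < a := by
    have := h.lt
    rw [hS, hT, ← add_sum_erase _ _ hv₁] at this
    lia
  have hge : G.degree v₁ ≤ a + #(G.neighborFinset v₁ \ S) := by
    rw [← G.card_neighborFinset_eq_degree, ← card_inter_add_card_sdiff _ S, ← hS]
    exact Nat.add_le_add_right (card_le_card inter_subset_right) _
  have hzero : ∑ v ∈ T.erase v₁, #(G.neighborFinset v \ S) = 0 := by lia
  refine _root_.exists_le_comap_Hgraph hcard h.disjoint hS hT hv₁ (fun v hv hne => ?_) (by lia)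
  rw [← sdiff_eq_empty_iff_subset, ← card_eq_zero]
  exact sum_eq_zero_iff.1 hzero v (mem_erase.2 ⟨hne, hv⟩)

end IsBarrier

/-! ### Barriers with `b + 1` vertices in `T`, all of small degree -/

lemma sum_sq_le_of_mem_Icc {ι : Type*} {s : Finset ι} {f : ι → ℝ} {p q : ℝ}
    (hf : ∀ i ∈ s, f i ∈ Set.Icc p q) :
    ∑ i ∈ s, f i ^ 2 ≤ (p + q) * ∑ i ∈ s, f i - #s * (p * q) := by
  rw [mul_sum, ← nsmul_eq_mul, ← sum_const, ← sum_sub_distrib]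
  refine sum_le_sum fun i hi => ?_
  linarith [mul_nonneg (sub_nonneg.2 (hf i hi).1) (sub_nonneg.2 (hf i hi).2)]

lemma four_mul_mul_le_of_sub_le {a b n l : ℝ} (ha : 1 ≤ a) (hab : a + 1 ≤ b)
    (hn : 2 * (a + b + 2) * (b + 2) ≤ n) (hl : n - b - 2 ≤ l) : 4 * a * (b + 2) ≤ l := by
  nlinarith

-- Otherwise eliminating `z` would leave `(a - 1) * L ≤ P * D` for `P` the left side of `hz`, which
-- fails as `L` is quadratically large.
lemma lt_mul_sub_of_le_mul {a b L z D Q : ℝ} (ha : 2 ≤ a) (hb : 0 ≤ b)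
    (hL : (4 * a * (b + 2)) ^ 2 ≤ L) (hD0 : 0 ≤ D) (hD : D ≤ a * (b + 2) - 1)
    (hQ : Q ≤ (b + 1) * a ^ 2 + (3 * a - 2) * (a - 1))
    (hz : b * a ^ 2 + (2 * a - 1) ^ 2 ≤ L * z) : Q < z * (L - D) := by
  by_contra! hle
  set P := b * a ^ 2 + (2 * a - 1) ^ 2 with hP
  have hLD : 0 ≤ L - D := by nlinarith
  have hL0 : 0 ≤ L := by linarith
  have hPQ : P * (L - D) ≤ Q * L := by
    calc P * (L - D) ≤ L * z * (L - D) := mul_le_mul_of_nonneg_right hz hLD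
      _ = z * (L - D) * L := by ring
      _ ≤ Q * L := mul_le_mul_of_nonneg_right hle hL0
  have hgap : a - 1 ≤ P - Q := by rw [hP]; linarith
  have hPD : (a - 1) * L ≤ P * D := by
    linarith [mul_le_mul_of_nonneg_right hgap hL0]
  have hPle : P ≤ a ^ 2 * (2 * (b + 2)) := by rw [hP]; nlinarith [mul_nonneg hb (sq_nonneg a)]
  have hDle : D ≤ 2 * (a - 1) * (b + 2) := by nlinarith
  have hprod : P * D ≤ a ^ 2 * (2 * (b + 2)) * (2 * (a - 1) * (b + 2)) :=
    mul_le_mul hPle hDle hD0 (by positivity)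
  have hLa : (a - 1) * (4 * a * (b + 2)) ^ 2 ≤ (a - 1) * L :=
    mul_le_mul_of_nonneg_left hL (by linarith)
  have hpos : 0 < (a - 1) * (a * (b + 2)) ^ 2 := mul_pos (by linarith) (by positivity)
  linarith

lemma le_sq_add_mul_of_spectralRadius_Hgraph_le {l : ℝ} (ha : 0 < a) (hn : 2 * a + b < n)
    (hl : (Hgraph n a b).spectralRadius ≤ l) :
    b * (a : ℝ) ^ 2 + (2 * a - 1) ^ 2 ≤ (l ^ 2 + l) * (l + 1 - (n - b - 1)) := by
  refine (le_spectralRadius_Hgraph_mul ha hn).trans ?_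
  have hH := sub_le_spectralRadius_Hgraph (a := a) (b := b) (n := n) (by lia)
  have hn' : (b : ℝ) + 2 ≤ n := mod_cast (by lia : b + 2 ≤ n)
  have hl0 : 0 ≤ l := by linarith
  rw [show l ^ 2 + l = l * (l + 1) by ring]
  gcongr <;> linarith

namespace IsBarrier

lemma sum_degree_le (h : IsBarrier G a b S T) (hab : a ≤ b) (hT : #T = b + 1) :
    ∑ v ∈ T, (G.degree v : ℝ) ≤ a * (b + 2) - 1 := by
  have hnat : ∑ v ∈ T, G.degree v + 1 ≤ a * (b + 2) := by
    have := h.sum_degree_lt hT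
    have := h.card_left_le hab hT
    lia
  exact le_sub_iff_add_le.2 (mod_cast hnat)

lemma sum_sq_degree_le (h : IsBarrier G a b S T) (hab : a ≤ b) (ha : 1 ≤ a)
    (hT : #T = b + 1) (hdeg : ∀ v ∈ T, (G.degree v : ℝ) ∈ Set.Icc (a : ℝ) (2 * a - 2)) :
    ∑ v ∈ T, (G.degree v : ℝ) ^ 2 ≤ (b + 1) * a ^ 2 + (3 * a - 2) * (a - 1) := by
  have hsq := sum_sq_le_of_mem_Icc hdeg
  have ha' : (1 : ℝ) ≤ a := mod_cast ha
  have hmul := mul_le_mul_of_nonneg_left (h.sum_degree_le hab hT)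
    (by linarith : 0 ≤ (a : ℝ) + (2 * a - 2))
  rw [hT] at hsq
  push_cast at hsq
  linarith

lemma spectralRadius_lt_spectralRadius_Hgraph (h : IsBarrier G a b S T) (ha : 0 < a)
    (hab : a < b) (hcard : Fintype.card V = n) (hn : 2 * (a + b + 2) * (b + 2) ≤ n)
    (hδ : ∀ v, a ≤ G.degree v) (hT : #T = b + 1) (hsmall : ∀ v ∈ T, G.degree v + 2 ≤ 2 * a) :
    G.spectralRadius < (Hgraph n a b).spectralRadius := by
  by_contra! hρ
  have hnb : 2 * a + b < n := by nlinarith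
  have hlower := le_sq_add_mul_of_spectralRadius_Hgraph_le ha hnb hρ
  have hl : 4 * (a : ℝ) * (b + 2) ≤ G.spectralRadius :=
    four_mul_mul_le_of_sub_le (mod_cast ha) (mod_cast hab) (mod_cast hn)
      ((sub_le_spectralRadius_Hgraph (by lia)).trans hρ)
  set l := G.spectralRadius
  obtain ⟨v₀, hv₀⟩ : T.Nonempty := card_pos.1 (by lia)
  have : Nonempty V := ⟨v₀⟩
  have ha2 : (2 : ℝ) ≤ a := mod_cast (by linarith [hδ v₀, hsmall v₀ hv₀] : 2 ≤ a)
  have hb0 : (0 : ℝ) ≤ b := b.cast_nonneg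
  have hl0 : 0 < l := by nlinarith
  have hL : (4 * (a : ℝ) * (b + 2)) ^ 2 ≤ l ^ 2 + l :=
    (pow_le_pow_left₀ (by positivity) hl 2).trans (by linarith)
  have hdeg : ∀ v ∈ T, (G.degree v : ℝ) ∈ Set.Icc (a : ℝ) (2 * a - 2) := fun v hv =>
    ⟨mod_cast hδ v, le_sub_iff_add_le.2 (mod_cast hsmall v hv)⟩
  have hsum := h.sum_degree_le hab.le hT
  have hupper : (l + 1 - #Tᶜ) * (l ^ 2 + l - ∑ v ∈ T, (G.degree v : ℝ)) ≤
      ∑ v ∈ T, (G.degree v : ℝ) ^ 2 :=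
    mul_le_sum_sq_degree hl0 (fun v hv => by nlinarith [(hdeg v hv).2])
      (by nlinarith [sq_nonneg l])
  have hTc : (#Tᶜ : ℝ) = n - b - 1 := by
    rw [card_compl, Nat.cast_sub (card_le_univ T), hcard, hT, Nat.cast_succ, sub_sub]
  rw [hTc] at hupper
  exact hupper.not_gt <| lt_mul_sub_of_le_mul ha2 hb0 hL
    (sum_nonneg fun v _ => Nat.cast_nonneg _) hsum (h.sum_sq_degree_le hab.le ha hT hdeg) hlower

end IsBarrier

theorem spectral_radius_abFactor_general (ha : 0 < a) (hab : a < b)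
    (hcard : Fintype.card V = n) (hn : 2 * (a + b + 2) * (b + 2) ≤ n)
    (hδ : ∀ v, a ≤ G.degree v) (hρ : (Hgraph n a b).spectralRadius ≤ G.spectralRadius) :
    G.HasABFactor a b ∨ Nonempty (G ≃g Hgraph n a b) := by
  refine or_iff_not_imp_left.2 fun hfactor => ?_
  obtain ⟨S, T, hST⟩ := exists_isBarrier hab hfactor
  have hn0 : b + 2 ≤ n := by nlinarith
  have hT : #T = b + 1 := by
    refine le_antisymm (not_lt.1 fun hT => ?_) (hST.lt_card_right hδ)
    have hlt := hST.spectralRadius_lt ha hab hcard hn hδ hT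
    exact ((sub_le_spectralRadius_Hgraph hn0).trans hρ).not_gt hlt
  obtain ⟨v₁, hv₁, hdeg⟩ : ∃ v ∈ T, 2 * a - 1 ≤ G.degree v := by
    by_contra! hsmall
    exact hρ.not_gt <| hST.spectralRadius_lt_spectralRadius_Hgraph ha hab hcard hn hδ hT
      fun v hv => by have := hsmall v hv; lia
  obtain ⟨e, he⟩ := hST.exists_le_comap_Hgraph hab.le hcard hδ hT hv₁ hdeg
  exact nonempty_iso_of_le_comap_of_spectralRadius_le e he (Hgraph_connected ha (by lia)) hρ

end Main

/-- **Theorem 1.1.** Let `a < b` be positive integers and `G` a connected graph of order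
`n ≥ 2(a+b+2)(b+2)` with minimum degree at least `a`. If `ρ(G) ≥ ρ(H_n^{a,b})`, then `G`
contains an `[a,b]`-factor, unless `G ≅ H_n^{a,b}`. -/
theorem spectral_radius_abFactor (a b n : ℕ) (ha : 0 < a) (hab : a < b)
    (hn : 2 * (a + b + 2) * (b + 2) ≤ n)
    (G : SimpleGraph (Fin n)) [DecidableRel G.Adj]
    (hconn : G.Connected) (hδ : ∀ v, a ≤ G.degree v)
    (hρ : (Hgraph n a b).spectralRadius ≤ G.spectralRadius) :
    G.HasABFactor a b ∨ Nonempty (G ≃g Hgraph n a b) :=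
  spectral_radius_abFactor_general ha hab (Fintype.card_fin n) hn hδ hρ
end

section
/- Let a and b be positive integers with b > a, and let G be a connected graph of order n ≥ 4a + 5b/2 + 6 with minimum degree δ(G) ≥ a. If the number of edges of G satisfies e(G) ≥ C(n-b-1, 2) + ab + 2a, then G contains an [a,b]-factor. -/
open Finset Matrix

/-!
Lovász's criterion: if `g < f` and `G` has no spanning subgraph with all degrees between `g` and
`f`, there are disjoint sets `S`, `T` with `f(S) + ∑ x ∈ T, d_{G - S}(x) < g(T)`. To find them, take
a subgraph `H` with degrees at most `f` and least total deficiency below `g`, a vertex `r` with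
`d_H(r) < g(r)`, and all walks from `r` whose edges lie alternately in `G \ H` and in `H`. The ends
of the walks of even length form `T`, those of odd length form `S`. Exchanging edges at the end of
a shortest walk shows that `d_H ≤ g` on `T` and `d_H = f` on `S`.

For constant `g = a` and `f = b`, write `s = |S|` and `t = |T|`. The minimum degree forces
`t = b + 1 + j` with `j ≥ 0`, and then `s ≤ a + j`. At most `C(n - t, 2)` edges avoid `T`, so
`e(G) < C(n - t, 2) + (t - b) s + a t`, which is at most `C(n - b - 1, 2) + a b + 2 a`.
-/

namespace ABFactor

open SimpleGraph

variable {V : Type*} {G H H' : SimpleGraph V}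

section Exchange

variable {x y z : V}

/-- The exchange along an alternating path `x, y, z`: the edge `xy` is added to `H` and the edge
`yz` is removed. -/
def exchange (H : SimpleGraph V) (x y z : V) : SimpleGraph V :=
  (H ⊔ edge x y) \ edge y z

lemma sup_edge_le (hHG : H ≤ G) (hxy : G.Adj x y) : H ⊔ edge x y ≤ G :=
  sup_le hHG ((edge_le_iff G).2 (.inr hxy))

variable [Fintype V] [DecidableEq V] [DecidableRel H.Adj]

lemma degree_edge [DecidableRel (edge x y).Adj] (hne : x ≠ y) (v : V) :
    (edge x y).degree v = if v = x ∨ v = y then 1 else 0 := by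
  have hnbr : (edge x y).neighborFinset v =
      if v = x then {y} else if v = y then {x} else ∅ := by
    ext u
    simp only [mem_neighborFinset, edge_adj]
    grind
  rw [← card_neighborFinset_eq_degree, hnbr]
  grind

lemma degree_sup_edge [DecidableRel (H ⊔ edge x y).Adj] (hne : x ≠ y)
    (hxy : ¬ H.Adj x y) (v : V) :
    (H ⊔ edge x y).degree v = H.degree v + if v = x ∨ v = y then 1 else 0 := by
  rw [← degree_edge hne, ← card_neighborFinset_eq_degree,
    neighborFinset_sup_of_disjoint v ((disjoint_edge H).2 hxy), card_disjUnion,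
    card_neighborFinset_eq_degree, card_neighborFinset_eq_degree]

lemma degree_exchange [DecidableRel (exchange H x y z).Adj]
    (hxy : x ≠ y) (hnadj : ¬ H.Adj x y) (hadj : H.Adj y z) (v : V) :
    (exchange H x y z).degree v + (if v = z then 1 else 0) =
      H.degree v + if v = x then 1 else 0 := by
  have hyz : ¬ (exchange H x y z).Adj y z := by
    simp [exchange, edge_adj, hadj.ne]
  have hrestore : exchange H x y z ⊔ edge y z = H ⊔ edge x y :=
    sdiff_sup_cancel <| ((edge_le_iff H).2 (.inr hadj)).trans le_sup_left
  have hadded := degree_sup_edge hxy hnadj v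
  have hremoved : (H ⊔ edge x y).degree v =
      (exchange H x y z).degree v + if v = y ∨ v = z then 1 else 0 := by
    convert degree_sup_edge hadj.ne hyz v using 2
    exact hrestore.symm
  have hyz_ne : y ≠ z := hadj.ne
  grind

end Exchange

section Optimal

variable [Fintype V] [DecidableRel H.Adj] [DecidableRel H'.Adj] {g f : V → ℕ}

/-- The total amount by which the degrees of `H` fall short of the lower bounds `g`; vertices with
`g v ≤ H.degree v` contribute `0` by truncated subtraction. -/
def deficiency (g : V → ℕ) (H : SimpleGraph V) [DecidableRel H.Adj] : ℕ :=
  ∑ v, (g v - H.degree v)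

/-- `H` has the least deficiency with respect to `g` among the spanning subgraphs of `G` with
degrees at most `f`. -/
structure IsOptimal (G : SimpleGraph V) (g f : V → ℕ) (H : SimpleGraph V) [DecidableRel H.Adj] :
    Prop where
  le : H ≤ G
  degree_le : ∀ v, H.degree v ≤ f v
  deficiency_le : ∀ (K : SimpleGraph V) [DecidableRel K.Adj], K ≤ G → (∀ v, K.degree v ≤ f v) →
    deficiency g H ≤ deficiency g K

lemma exists_isOptimal (G : SimpleGraph V) (g f : V → ℕ) :
    ∃ (H : SimpleGraph V) (_ : DecidableRel H.Adj), IsOptimal G g f H := by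
  classical
  have hne : ∃ d, ∃ (K : SimpleGraph V) (_ : DecidableRel K.Adj),
      K ≤ G ∧ (∀ v, K.degree v ≤ f v) ∧ deficiency g K = d :=
    ⟨_, ⊥, inferInstance, bot_le, by simp, rfl⟩
  obtain ⟨H, inst, hle, hdeg, hdef⟩ := Nat.find_spec hne
  exact ⟨H, inst, hle, hdeg, fun K _ hKG hK ↦
    hdef.trans_le <| Nat.find_min' hne ⟨K, inferInstance, hKG, hK, rfl⟩⟩

lemma IsOptimal.of_forall_le (hH : IsOptimal G g f H) (hle : H' ≤ G)
    (hdeg : ∀ v, H'.degree v ≤ f v) (hdef : ∀ v, g v - H'.degree v ≤ g v - H.degree v) :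
    IsOptimal G g f H' where
  le := hle
  degree_le := hdeg
  deficiency_le K _ hKG hK := (sum_le_sum fun v _ ↦ hdef v).trans (hH.deficiency_le K hKG hK)

lemma IsOptimal.deficit_eq_of_forall_le (hH : IsOptimal G g f H) (hle : H' ≤ G)
    (hdeg : ∀ v, H'.degree v ≤ f v) (hdef : ∀ v, g v - H'.degree v ≤ g v - H.degree v) (v : V) :
    g v - H'.degree v = g v - H.degree v :=
  (sum_eq_sum_iff_of_le fun v _ ↦ hdef v).1
    ((sum_le_sum fun v _ ↦ hdef v).antisymm (hH.deficiency_le H' hle hdeg)) v (mem_univ v)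

end Optimal

section Alternating

variable {r x : V} {k : ℕ}

/-- The vertices at which a walk from `r` of length `2 * k` can end when its edges lie alternately
in `G \ H` and in `H`. -/
def altLevel (G H : SimpleGraph V) (r : V) : ℕ → Set V
  | 0 => {r}
  | k + 1 => {z | ∃ x ∈ altLevel G H r k, ∃ y, (G \ H).Adj x y ∧ H.Adj y z}

lemma mem_altLevel_of_adj_imp (hx : x ∈ altLevel G H r k)
    (hnew : ∀ i < k, ∀ u ∈ altLevel G H r i, ∀ w, (G \ H).Adj u w → ¬ H'.Adj u w)
    (hold : ∀ i < k, ∀ u ∈ altLevel G H r (i + 1), ∀ w, H.Adj w u → H'.Adj w u) :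
    x ∈ altLevel G H' r k := by
  induction k generalizing x with
  | zero => exact hx
  | succ k ih =>
    obtain ⟨u, hu, w, huw, hwx⟩ := id hx
    refine ⟨u, ih hu (fun i hi ↦ hnew i (by lia)) (fun i hi ↦ hold i (by lia)), w,
      ⟨huw.1, hnew k k.lt_succ_self u hu w huw⟩, hold k k.lt_succ_self x hx w hwx⟩

variable [Fintype V] [DecidableRel H.Adj] [DecidableRel H'.Adj] {g f : V → ℕ}

/-- In every optimal subgraph, walks of length `2 * k` from a deficient vertex end at vertices of
degree at most `g`. The subgraph is quantified because the induction on `k` exchanges edges. -/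
def LevelDegreeLE (G : SimpleGraph V) (g f : V → ℕ) (k : ℕ) : Prop :=
  ∀ ⦃H : SimpleGraph V⦄ [DecidableRel H.Adj] ⦃r : V⦄, IsOptimal G g f H → H.degree r < g r →
    ∀ ⦃x⦄, x ∈ altLevel G H r k → H.degree x ≤ g x

/-- In every optimal subgraph, walks of length `2 * k + 1` from a deficient vertex end at vertices
of degree `f`. -/
def LevelSaturated (G : SimpleGraph V) (g f : V → ℕ) (k : ℕ) : Prop :=
  ∀ ⦃H : SimpleGraph V⦄ [DecidableRel H.Adj] ⦃r : V⦄, IsOptimal G g f H → H.degree r < g r →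
    ∀ ⦃x⦄, x ∈ altLevel G H r k → ∀ ⦃y⦄, (G \ H).Adj x y → H.degree y = f y

lemma LevelDegreeLE.notMem_altLevel (hk : LevelDegreeLE G g f k) (hH : IsOptimal G g f H)
    (hr : H.degree r < g r) (hle : H' ≤ G) (hdeg : ∀ v, H'.degree v ≤ f v)
    (hdef : ∀ v, g v - H'.degree v ≤ g v - H.degree v) (hx : H.degree x < H'.degree x) :
    x ∉ altLevel G H' r k := by
  intro hmem
  have hdef_eq := hH.deficit_eq_of_forall_le hle hdeg hdef
  have hr' : H'.degree r < g r := by have := hdef_eq r; lia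
  have hx' : H'.degree x ≤ g x := hk (hH.of_forall_le hle hdeg hdef) hr' hmem
  have := hdef_eq x
  lia

lemma LevelDegreeLE.levelSaturated (hgf : ∀ v, g v < f v) (hdegk : LevelDegreeLE G g f k)
    (hsat : ∀ i < k, LevelSaturated G g f i) : LevelSaturated G g f k := by
  classical
  intro H _ r hH hr x hx y hxy
  by_contra hne
  have hxg : H.degree x ≤ g x := hdegk hH hr hx
  have hyf : H.degree y < f y := (hH.degree_le y).lt_of_ne hne
  have hdegree := degree_sup_edge (H := H) hxy.1.ne hxy.2
  refine hdegk.notMem_altLevel (H' := H ⊔ edge x y) (x := x) hH hr (sup_edge_le hH.le hxy.1)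
    (fun v ↦ ?_) (fun v ↦ ?_) ?_ (mem_altLevel_of_adj_imp hx (fun i hi u hu w huw ↦ ?_) ?_)
  · have := hH.degree_le v
    have := hgf v
    grind
  · grind
  · grind
  · have hux : u ≠ x := by
      rintro rfl
      exact hne (hsat i hi hH hr hu hxy)
    have hwx : w ≠ x := by
      rintro rfl
      have := hsat i hi hH hr hu huw
      have := hgf w
      lia
    have := huw.2
    simp only [sup_adj, edge_adj]
    grind
  · exact fun _ _ _ _ _ hadj ↦ .inl hadj

lemma levelDegreeLE_succ (hgf : ∀ v, g v < f v) (hdeg : ∀ i ≤ k, LevelDegreeLE G g f i)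
    (hsatk : LevelSaturated G g f k) : LevelDegreeLE G g f (k + 1) := by
  classical
  intro H _ r hH hr z hz
  by_contra! hzg
  obtain ⟨x, hx, y, hxy, hyz⟩ := hz
  have hxg : H.degree x ≤ g x := hdeg k le_rfl hH hr hx
  have hyf : H.degree y = f y := hsatk hH hr hx hxy
  have hne_y {i : ℕ} (hi : i ≤ k) {u : V} (hu : u ∈ altLevel G H r i) : u ≠ y := by
    rintro rfl
    have := hdeg i hi hH hr hu
    have := hgf u
    lia
  have hne_z {i : ℕ} (hi : i ≤ k) {u : V} (hu : u ∈ altLevel G H r i) : u ≠ z := by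
    rintro rfl
    exact hzg.not_ge (hdeg i hi hH hr hu)
  have hne_x {i : ℕ} (hi : i < k) {u : V} (hu : u ∈ altLevel G H r i) : u ≠ x := by
    rintro rfl
    exact hne_z (Nat.succ_le_of_lt hi) ⟨u, hu, y, hxy, hyz⟩ rfl
  have hxz : x ≠ z := hne_z le_rfl hx
  have hdegree := degree_exchange (H := H) hxy.1.ne hxy.2 hyz
  refine (hdeg k le_rfl).notMem_altLevel (H' := exchange H x y z) (x := x) hH hr
    (sdiff_le.trans (sup_edge_le hH.le hxy.1)) (fun v ↦ ?_) (fun v ↦ ?_) ?_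
    (mem_altLevel_of_adj_imp hx (fun i hi u hu w huw ↦ ?_) (fun i hi u hu w hwu ↦ ?_))
  · have := hH.degree_le v
    have := hgf v
    grind
  · grind
  · grind
  · have := huw.2
    have := hne_x hi hu
    have := hne_y hi.le hu
    simp only [exchange, sdiff_adj, sup_adj, edge_adj]
    grind
  · have := hne_y (Nat.succ_le_of_lt hi) hu
    have := hne_z (Nat.succ_le_of_lt hi) hu
    simp only [exchange, sdiff_adj, sup_adj, edge_adj]
    grind

lemma levelDegreeLE_and_levelSaturated (hgf : ∀ v, g v < f v) (k : ℕ) :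
    LevelDegreeLE G g f k ∧ LevelSaturated G g f k := by
  induction k using Nat.strong_induction_on with
  | _ k ih =>
    have hdeg : LevelDegreeLE G g f k := by
      rcases k with _ | k
      · rintro H _ r - hr x rfl
        exact hr.le
      · exact levelDegreeLE_succ hgf (fun i hi ↦ (ih i (by lia)).1) (ih k k.lt_succ_self).2
    exact ⟨hdeg, hdeg.levelSaturated hgf fun i hi ↦ (ih i hi).2⟩

end Alternating

section FactorTheorem

variable [Fintype V] [DecidableEq V] [DecidableRel G.Adj] [DecidableRel H.Adj] {g f : V → ℕ}

lemma sum_card_neighborFinset_inter_comm (H : SimpleGraph V) [DecidableRel H.Adj]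
    (S T : Finset V) :
    ∑ x ∈ T, #(H.neighborFinset x ∩ S) = ∑ y ∈ S, #(H.neighborFinset y ∩ T) := by
  convert sum_card_bipartiteAbove_eq_sum_card_bipartiteBelow H.Adj (s := T) (t := S) using 3
  · ext
    simp [and_comm]
  · ext
    simp [and_comm, adj_comm]

lemma sum_degree_eq_of_closed {S T : Finset V} (hHG : H ≤ G)
    (hST : ∀ y ∈ S, ∀ z, H.Adj y z → z ∈ T) (hTS : ∀ x ∈ T, ∀ u, (G \ H).Adj x u → u ∈ S) :
    ∑ x ∈ T, H.degree x = ∑ y ∈ S, H.degree y + ∑ x ∈ T, #(G.neighborFinset x \ S) := by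
  have hin (y : V) (hy : y ∈ S) : H.neighborFinset y ∩ T = H.neighborFinset y :=
    inter_eq_left.2 fun z hz ↦ hST y hy z ((mem_neighborFinset ..).1 hz)
  have hout (x : V) (hx : x ∈ T) : H.neighborFinset x \ S = G.neighborFinset x \ S := by
    ext u
    have := hTS x hx u
    have := @hHG x u
    simp only [mem_sdiff, mem_neighborFinset, sdiff_adj] at *
    tauto
  calc ∑ x ∈ T, H.degree x
      = ∑ x ∈ T, #(H.neighborFinset x ∩ S) + ∑ x ∈ T, #(H.neighborFinset x \ S) := by
        simp only [← sum_add_distrib, card_inter_add_card_sdiff, card_neighborFinset_eq_degree]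
    _ = ∑ y ∈ S, H.degree y + ∑ x ∈ T, #(G.neighborFinset x \ S) := by
        rw [sum_card_neighborFinset_inter_comm]
        congr 1
        · exact sum_congr rfl fun y hy ↦ by rw [hin y hy, card_neighborFinset_eq_degree]
        · exact sum_congr rfl fun x hx ↦ by rw [hout x hx]

lemma IsOptimal.exists_disjoint_sum_lt (hgf : ∀ v, g v < f v) (hH : IsOptimal G g f H) {r : V}
    (hr : H.degree r < g r) :
    ∃ S T : Finset V, Disjoint S T ∧
      ∑ y ∈ S, f y + ∑ x ∈ T, #(G.neighborFinset x \ S) < ∑ x ∈ T, g x := by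
  classical
  let T : Finset V := {x | ∃ k, x ∈ altLevel G H r k}
  let S : Finset V := {y | ∃ x ∈ T, (G \ H).Adj x y}
  have hT : ∀ x ∈ T, H.degree x ≤ g x := fun x hx ↦ by
    obtain ⟨k, hk⟩ := (mem_filter_univ x).1 hx
    exact (levelDegreeLE_and_levelSaturated hgf k).1 hH hr hk
  have hS : ∀ y ∈ S, H.degree y = f y := fun y hy ↦ by
    obtain ⟨x, hx, hxy⟩ := (mem_filter_univ y).1 hy
    obtain ⟨k, hk⟩ := (mem_filter_univ x).1 hx
    exact (levelDegreeLE_and_levelSaturated hgf k).2 hH hr hk hxy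
  have hST : ∀ y ∈ S, ∀ z, H.Adj y z → z ∈ T := fun y hy z hyz ↦ by
    obtain ⟨x, hx, hxy⟩ := (mem_filter_univ y).1 hy
    obtain ⟨k, hk⟩ := (mem_filter_univ x).1 hx
    exact (mem_filter_univ z).2 ⟨k + 1, x, hk, y, hxy, hyz⟩
  have hTS : ∀ x ∈ T, ∀ u, (G \ H).Adj x u → u ∈ S := fun x hx u hxu ↦
    (mem_filter_univ u).2 ⟨x, hx, hxu⟩
  refine ⟨S, T, disjoint_left.2 fun v hvS hvT ↦ ?_, ?_⟩
  · exact (hgf v).not_ge ((hS v hvS).symm.trans_le (hT v hvT))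
  · rw [← sum_congr rfl hS, ← sum_degree_eq_of_closed hH.le hST hTS]
    exact sum_lt_sum hT ⟨r, (mem_filter_univ r).2 ⟨0, rfl⟩, hr⟩

theorem exists_le_degree_and_degree_le_of_sum_le (hgf : ∀ v, g v < f v)
    (hsum : ∀ S T : Finset V, Disjoint S T →
      ∑ x ∈ T, g x ≤ ∑ y ∈ S, f y + ∑ x ∈ T, #(G.neighborFinset x \ S)) :
    ∃ (H : SimpleGraph V) (_ : DecidableRel H.Adj),
      H ≤ G ∧ ∀ v, g v ≤ H.degree v ∧ H.degree v ≤ f v := by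
  obtain ⟨H, _, hH⟩ := exists_isOptimal G g f
  refine ⟨H, inferInstance, hH.le, fun v ↦ ⟨?_, hH.degree_le v⟩⟩
  by_contra! hv
  obtain ⟨S, T, hdisj, hlt⟩ := hH.exists_disjoint_sum_lt hgf hv
  exact hlt.not_ge (hsum S T hdisj)

lemma hasABFactor_of_mul_card_le {a b : ℕ} (hab : a < b)
    (hST : ∀ S T : Finset V, Disjoint S T →
      a * #T ≤ b * #S + ∑ x ∈ T, #(G.neighborFinset x \ S)) :
    G.HasABFactor a b := by
  obtain ⟨H, _, hHG, hH⟩ := exists_le_degree_and_degree_le_of_sum_le (G := G)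
    (g := fun _ ↦ a) (f := fun _ ↦ b) (fun _ ↦ hab) fun S T hdisj ↦ by
      simpa only [sum_const, smul_eq_mul, mul_comm] using hST S T hdisj
  refine ⟨H, hHG, fun v ↦ ?_⟩
  convert hH v

end FactorTheorem

section Counting

variable [Fintype V] [DecidableEq V] [DecidableRel G.Adj]

lemma card_edgeFinset_le_choose_add_sum_degree (T : Finset V) :
    #G.edgeFinset ≤ (#Tᶜ).choose 2 + ∑ x ∈ T, G.degree x := by
  have hcover : G.edgeFinset ⊆
      Tᶜ.offDiag.image (Function.uncurry Sym2.mk) ∪ T.biUnion (G.incidenceFinset ·) := by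
    intro e he
    induction e with | _ u w
    have hadj : G.Adj u w := mem_edgeFinset.1 he
    by_cases hT : u ∈ T ∨ w ∈ T
    · refine mem_union_right _ (mem_biUnion.2 ?_)
      rcases hT with hu | hw
      · exact ⟨u, hu, by simpa [incidenceSet] using hadj⟩
      · exact ⟨w, hw, by simpa [incidenceSet] using hadj⟩
    · push Not at hT
      exact mem_union_left _ (mem_image.2 ⟨(u, w), by simp [hT, hadj.ne], rfl⟩)
  calc #G.edgeFinset
      ≤ #(Tᶜ.offDiag.image (Function.uncurry Sym2.mk)) + #(T.biUnion (G.incidenceFinset ·)) :=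
        (card_le_card hcover).trans (card_union_le _ _)
    _ ≤ (#Tᶜ).choose 2 + ∑ x ∈ T, G.degree x := by
        rw [Sym2.card_image_offDiag]
        gcongr
        simpa only [card_incidenceFinset_eq_degree] using
          card_biUnion_le (s := T) (t := (G.incidenceFinset ·))

lemma sum_degree_le_card_mul_card_add (S T : Finset V) :
    ∑ x ∈ T, G.degree x ≤ #T * #S + ∑ x ∈ T, #(G.neighborFinset x \ S) := by
  rw [← smul_eq_mul, ← sum_const, ← sum_add_distrib]
  refine sum_le_sum fun x _ ↦ ?_
  rw [← card_neighborFinset_eq_degree, add_comm]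
  exact card_le_card_sdiff_add_card

end Counting

lemma choose_two_add_le {a j m s : ℕ} (hsm : s ≤ m) (hsa : s ≤ a + j)
    (hmj : 5 * a + 5 ≤ m + j) :
    m.choose 2 + (j + 1) * s + a * j ≤ (m + j).choose 2 + a := by
  rcases j.eq_zero_or_pos with rfl | hj
  · lia
  have hlinear : 2 * (s + a) + 3 ≤ 2 * m + j := by lia
  qify at hlinear hsa hj ⊢
  rw [Nat.cast_choose_two, Nat.cast_choose_two]
  push_cast
  nlinarith

end ABFactor

open ABFactor in
theorem size_abFactor_general {V : Type*} [Fintype V] {a b : ℕ} (hab : a < b)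
    (G : SimpleGraph V) [DecidableRel G.Adj] (hcard : 5 * a + b + 6 ≤ Fintype.card V)
    (hδ : ∀ v, a ≤ G.degree v)
    (he : (Fintype.card V - b - 1).choose 2 + a * b + 2 * a ≤ #G.edgeFinset) :
    G.HasABFactor a b := by
  classical
  refine hasABFactor_of_mul_card_le hab fun S T hdisj ↦ ?_
  by_contra! hlt
  have hsum := sum_degree_le_card_mul_card_add (G := G) S T
  have hmin : #T * a ≤ ∑ x ∈ T, G.degree x := card_nsmul_le_sum T _ a fun x _ ↦ hδ x
  have hbT : b < #T := by
    have : b * #S < #T * #S := by lia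
    exact lt_of_mul_lt_mul_right' this
  obtain ⟨j, hj⟩ := Nat.exists_eq_add_of_lt hbT
  have hSa : #S ≤ a + j := by
    by_contra! hS
    have : b * (a + j + 1) ≤ b * #S := Nat.mul_le_mul_left b hS
    have : a * (j + 1) ≤ b * (j + 1) := Nat.mul_le_mul_right (j + 1) hab.le
    rw [hj] at hlt
    lia
  have hSm : #S ≤ #Tᶜ := card_le_card (subset_compl_iff_disjoint_right.2 hdisj)
  have hm : Fintype.card V - b - 1 = #Tᶜ + j := by
    rw [card_compl]
    have := card_le_univ T
    lia
  have hedges := card_edgeFinset_le_choose_add_sum_degree (G := G) T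
  have hchoose := choose_two_add_le hSm hSa (by lia)
  rw [hm] at he
  rw [hj] at hlt hsum
  linarith

/-- **Theorem (size condition for an `[a,b]`-factor).** Let `a < b` be positive integers and
`G` a connected graph of order `n ≥ 4a + 5b/2 + 6` with minimum degree at least `a`. If
`e(G) ≥ C(n-b-1, 2) + ab + 2a`, then `G` contains an `[a,b]`-factor. -/
theorem size_abFactor (a b n : ℕ) (ha : 0 < a) (hab : a < b)
    (hn : 4 * (a : ℝ) + 5 * (b : ℝ) / 2 + 6 ≤ (n : ℝ))
    (G : SimpleGraph (Fin n)) [DecidableRel G.Adj]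
    (hconn : G.Connected) (hδ : ∀ v, a ≤ G.degree v)
    (he : (n - b - 1).choose 2 + a * b + 2 * a ≤ G.edgeFinset.card) :
    G.HasABFactor a b := by
  have hn' : 8 * a + 5 * b + 12 ≤ 2 * n := by rify; linarith
  exact size_abFactor_general hab G (by rw [Fintype.card_fin]; lia) hδ (by rwa [Fintype.card_fin])
end
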